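/- Fix a discrete memoryless MAC with finite alphabets and ε∈(0,1). There exist constants c₁, c₂ and n₀ such that for every sequence of positive integers (K_n) with log₂K_n/log₂n → ∞ and all n ≥ n₀ with log₂K_n ≥ c₁ log₂ n: R_sum(n,ε,K_n) ≥ C_sum + Δ( log₂K_n/n − c₁·(log₂n)/n ) − c₂/√n. -/

import Mathlib

/-!
The term `C_sum` cancels in `C_sum + Δ(a)`, so the claim is that every joint input pmf `q` with
`I(X₁;X₂) ≤ a` supports the sum rate `I_q(X₁,X₂;Y) - O(1/√n)`, with constants that do not depend
on `q`.

*Reduction to types.* Rounding `q` to the type `P` of a sequence `z` of `n` letter pairs changes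
the two mutual informations by `O(log n / n)` only (`exists_good_type`), by the modulus of
continuity of `t ↦ -t log t`.

*Code for a type.* The codewords of the two senders are coordinate permutations of the first and
of the second component of `z`, drawn uniformly: one permutation `σ` for every first message, and
`K` permutations `τ` for every second message. The facilitator looks for a `k` such that the two
codewords are jointly typical (`Joint`), meaning that the pair of codewords is a permutation of `z`.
Counting stabilizers, a random `τ` is jointly typical with a given `σ` with probability
`exp (-n I(X₁;X₂))` up to a polynomial factor (`joint_prob`). So the search succeeds with high
probability as soon as `log K` exceeds `n I(X₁;X₂)` by a large multiple of `log n`; that excess is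
what the constant `c₁` pays for. The decoder applies two threshold tests in succession, one for
`∏ P(yᵢ|x₁ᵢ) / ∏ P(yᵢ)` and one for `∏ W(yᵢ|x₁ᵢ,x₂ᵢ) / ∏ P(yᵢ|x₁ᵢ)`. The transmitted pair passes
both tests by Chebyshev's inequality with a slack of order `√n` (`decode_tail`). A competing
codeword passes with exponentially small probability (`confusion_one`, `confusion_two`): a uniform
permutation is dominated, up to a polynomial factor, by an i.i.d. law, to which Markov's inequality
applies. The random coding argument is isolated in `oneShot`, and `type_code` combines the bounds.
The exponents of the two tests add up to `I_P(X₁,X₂;Y)` (`natI_add`).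

`R_sum` is a supremum of reals, so the bound also needs the set of achievable rates to be bounded
above (`Rsum_bddAbove`).
-/

open scoped BigOperators Classical

noncomputable section

/-- A pmf on a finite type. -/
def IsPMF {α : Type*} [Fintype α] (p : α → ℝ) : Prop :=
  (∀ a, 0 ≤ p a) ∧ ∑ a, p a = 1

variable {X1 X2 Y : Type*} [Fintype X1] [Fintype X2] [Fintype Y]

/-- A discrete memoryless MAC: a conditional pmf `W(y|x₁,x₂)` on finite alphabets. -/
def IsChannel (W : X1 → X2 → Y → ℝ) : Prop :=
  (∀ x1 x2 y, 0 ≤ W x1 x2 y) ∧ ∀ x1 x2, ∑ y, W x1 x2 y = 1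

/-- The output marginal `p_Y` induced by a product input pmf `p₁·p₂`. -/
def outDist (W : X1 → X2 → Y → ℝ) (p1 : X1 → ℝ) (p2 : X2 → ℝ) (y : Y) : ℝ :=
  ∑ x1, ∑ x2, p1 x1 * p2 x2 * W x1 x2 y

/-- The joint information density `i(x₁,x₂;y) = log₂(W(y|x₁,x₂)/p_Y(y))`. -/
def iDens (W : X1 → X2 → Y → ℝ) (p1 : X1 → ℝ) (p2 : X2 → ℝ)
    (x1 : X1) (x2 : X2) (y : Y) : ℝ :=
  Real.logb 2 (W x1 x2 y / outDist W p1 p2 y)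

/-- The conditional output marginal `p_{Y|X₂}(y|x₂)`. -/
def condOut2 (W : X1 → X2 → Y → ℝ) (p1 : X1 → ℝ) (x2 : X2) (y : Y) : ℝ :=
  ∑ x1, p1 x1 * W x1 x2 y

/-- The conditional output marginal `p_{Y|X₁}(y|x₁)`. -/
def condOut1 (W : X1 → X2 → Y → ℝ) (p2 : X2 → ℝ) (x1 : X1) (y : Y) : ℝ :=
  ∑ x2, p2 x2 * W x1 x2 y

/-- The conditional information density `i(x₁;y|x₂)`. -/
def iDensC1 (W : X1 → X2 → Y → ℝ) (p1 : X1 → ℝ) (x1 : X1) (x2 : X2) (y : Y) : ℝ :=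
  Real.logb 2 (W x1 x2 y / condOut2 W p1 x2 y)

/-- The conditional information density `i(x₂;y|x₁)`. -/
def iDensC2 (W : X1 → X2 → Y → ℝ) (p2 : X2 → ℝ) (x1 : X1) (x2 : X2) (y : Y) : ℝ :=
  Real.logb 2 (W x1 x2 y / condOut1 W p2 x1 y)

/-- `i(x₁,x₂) = E[i(x₁,x₂;Y) | X₁=x₁, X₂=x₂] = D(W(·|x₁,x₂) ‖ p_Y)`. -/
def iBar (W : X1 → X2 → Y → ℝ) (p1 : X1 → ℝ) (p2 : X2 → ℝ) (x1 : X1) (x2 : X2) : ℝ :=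
  ∑ y, W x1 x2 y * iDens W p1 p2 x1 x2 y

/-- The mutual information `I(X₁,X₂;Y)` under the product input pmf `p₁·p₂` (log base 2). -/
def Isum (W : X1 → X2 → Y → ℝ) (p1 : X1 → ℝ) (p2 : X2 → ℝ) : ℝ :=
  ∑ x1, ∑ x2, p1 x1 * p2 x2 * iBar W p1 p2 x1 x2

/-- The conditional mutual information `I(X₁;Y|X₂)` under `p₁·p₂`. -/
def Icond1 (W : X1 → X2 → Y → ℝ) (p1 : X1 → ℝ) (p2 : X2 → ℝ) : ℝ :=
  ∑ x1, ∑ x2, ∑ y, p1 x1 * p2 x2 * W x1 x2 y * iDensC1 W p1 x1 x2 y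

/-- The conditional mutual information `I(X₂;Y|X₁)` under `p₁·p₂`. -/
def Icond2 (W : X1 → X2 → Y → ℝ) (p1 : X1 → ℝ) (p2 : X2 → ℝ) : ℝ :=
  ∑ x1, ∑ x2, ∑ y, p1 x1 * p2 x2 * W x1 x2 y * iDensC2 W p2 x1 x2 y

/-- `V₁ = Var(i(X₁,X₂))`, the information variance of the codewords. -/
def Vone (W : X1 → X2 → Y → ℝ) (p1 : X1 → ℝ) (p2 : X2 → ℝ) : ℝ :=
  ∑ x1, ∑ x2, p1 x1 * p2 x2 * (iBar W p1 p2 x1 x2 - Isum W p1 p2) ^ 2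

/-- `V₂ = E[Var(i(X₁,X₂;Y)|X₁,X₂)]`, the information variance of the channel noise. -/
def Vtwo (W : X1 → X2 → Y → ℝ) (p1 : X1 → ℝ) (p2 : X2 → ℝ) : ℝ :=
  ∑ x1, ∑ x2, ∑ y,
    p1 x1 * p2 x2 * W x1 x2 y * (iDens W p1 p2 x1 x2 y - iBar W p1 p2 x1 x2) ^ 2

/-- The average error probability of an `(M₁,M₂,K)` facilitated MAC code (facilitator `e`,
encoders `f₁, f₂`, decoder `g`) on the `n`-fold memoryless product channel. -/
def avgErr (W : X1 → X2 → Y → ℝ) {n M1 M2 K : ℕ}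
    (e : Fin M1 → Fin M2 → Fin K)
    (f1 : Fin M1 → Fin K → Fin n → X1) (f2 : Fin M2 → Fin K → Fin n → X2)
    (g : (Fin n → Y) → Fin M1 × Fin M2) : ℝ :=
  (1 / ((M1 : ℝ) * M2)) * ∑ m1, ∑ m2, ∑ y : Fin n → Y,
    (∏ i, W (f1 m1 (e m1 m2) i) (f2 m2 (e m1 m2) i) (y i)) *
      (if g y = (m1, m2) then 0 else 1)

/-- Existence of an `(n,M₁,M₂,K,ε)` facilitated MAC code. -/
def ExistsCode (W : X1 → X2 → Y → ℝ) (n M1 M2 K : ℕ) (ε : ℝ) : Prop :=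
  ∃ (e : Fin M1 → Fin M2 → Fin K) (f1 : Fin M1 → Fin K → Fin n → X1)
    (f2 : Fin M2 → Fin K → Fin n → X2) (g : (Fin n → Y) → Fin M1 × Fin M2),
    avgErr W e f1 f2 g ≤ ε

/-- The fundamental sum-rate limit `R_sum(n,ε,K)`. -/
def Rsum (W : X1 → X2 → Y → ℝ) (n : ℕ) (ε : ℝ) (K : ℕ) : ℝ :=
  sSup {r | ∃ M1 M2 : ℕ, 0 < M1 ∧ 0 < M2 ∧ ExistsCode W n M1 M2 K ε ∧
    r = Real.logb 2 ((M1 : ℝ) * M2) / n}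

/-- The sum-capacity `C_sum = max_{p₁·p₂} I(X₁,X₂;Y)`. -/
def Csum (W : X1 → X2 → Y → ℝ) : ℝ :=
  sSup {r | ∃ p1 p2, IsPMF p1 ∧ IsPMF p2 ∧ r = Isum W p1 p2}

/-- The output marginal induced by a joint input pmf `q` on `𝒳₁×𝒳₂`. -/
def outDistJ (W : X1 → X2 → Y → ℝ) (q : X1 × X2 → ℝ) (y : Y) : ℝ :=
  ∑ x1, ∑ x2, q (x1, x2) * W x1 x2 y

/-- The mutual information `I(X₁,X₂;Y)` under a joint input pmf `q` (log base 2). -/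
def IsumJ (W : X1 → X2 → Y → ℝ) (q : X1 × X2 → ℝ) : ℝ :=
  ∑ x1, ∑ x2, ∑ y, q (x1, x2) * W x1 x2 y *
    Real.logb 2 (W x1 x2 y / outDistJ W q y)

/-- First marginal of a joint pmf. -/
def margA (q : X1 × X2 → ℝ) (x1 : X1) : ℝ := ∑ x2, q (x1, x2)

/-- Second marginal of a joint pmf. -/
def margB (q : X1 × X2 → ℝ) (x2 : X2) : ℝ := ∑ x1, q (x1, x2)

/-- The mutual information `I(X₁;X₂)` of a joint input pmf `q` (log base 2). -/
def MIJ (q : X1 × X2 → ℝ) : ℝ :=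
  ∑ x1, ∑ x2, q (x1, x2) *
    Real.logb 2 (q (x1, x2) / (margA q x1 * margB q x2))

/-- `Δ(a) = max{I(X₁,X₂;Y) : joint pmfs with I(X₁;X₂) ≤ a} − C_sum`. -/
def Delta (W : X1 → X2 → Y → ℝ) (a : ℝ) : ℝ :=
  sSup {r | ∃ q : X1 × X2 → ℝ, IsPMF q ∧ MIJ q ≤ a ∧ r = IsumJ W q} - Csum W

set_option linter.unusedSectionVars false

/-! ### Random coding with a facilitator, one shot -/

/-- Averaging out one coordinate of a function on a product of copies of `A`. -/
lemma sum_pi_le {ι A : Type*} [Fintype ι] [DecidableEq ι] [Fintype A] (j : ι) (f : (ι → A) → ℝ) (C : ℝ)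
    (h : ∀ x, ∑ a, f (Function.update x j a) ≤ C * Fintype.card A) :
    ∑ x, f x ≤ C * Fintype.card (ι → A) := by
  rcases isEmpty_or_nonempty A with hA | hA
  · have : IsEmpty (ι → A) := ⟨fun x => hA.elim (x j)⟩
    simp
  have key : ∀ g : (ι → A) → ℝ, ∑ x, g x = ∑ w : {i // i ≠ j} → A, ∑ a,
      g ((Equiv.funSplitAt j A).symm (a, w)) := by
    intro g
    rw [← Equiv.sum_comp (Equiv.funSplitAt j A).symm g, Fintype.sum_prod_type_right]
  have hc : (Fintype.card (ι → A) : ℝ) =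
      (Fintype.card A : ℝ) * Fintype.card ({i // i ≠ j} → A) := by
    rw [Fintype.card_congr (Equiv.funSplitAt j A), Fintype.card_prod]
    push_cast
    rfl
  obtain ⟨a0⟩ := hA
  rw [key, hc]
  calc _ ≤ ∑ w : {i // i ≠ j} → A, C * Fintype.card A := by
        refine Finset.sum_le_sum fun w _ => ?_
        refine le_trans (le_of_eq ?_) (h ((Equiv.funSplitAt j A).symm (a0, w)))
        refine Finset.sum_congr rfl fun a _ => ?_
        congr 1
        ext i
        by_cases hi : i = j
        · subst hi; simp [Equiv.funSplitAt, Equiv.piSplitAt]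
        · simp [Equiv.funSplitAt, Equiv.piSplitAt, hi]
    _ = _ := by
        rw [Finset.sum_const, Finset.card_univ, nsmul_eq_mul]
        ring

/-- The index chosen by the facilitator: some `k` with property `t`, if there is one. It depends
on the property only as a predicate. -/
def pick {K : ℕ} (hK : 0 < K) (t : Fin K → Prop) : Fin K :=
  if h : ∃ k, t k then h.choose else ⟨0, hK⟩

lemma pick_spec {K : ℕ} (hK : 0 < K) (t : Fin K → Prop) (h : ∃ k, t k) : t (pick hK t) := by
  unfold pick
  rw [dif_pos h]
  exact h.choose_spec

/-- If a fraction at least `τ` of `B` has property `t`, then `K` uniform independent samples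
all miss it with probability at most `exp (-K τ)`. -/
lemma fail_le {B : Type*} [Fintype B] {K : ℕ} (hK : 0 < K) (t : B → Prop) (τ : ℝ)
    (h : τ * Fintype.card B ≤ ∑ b, if t b then (1 : ℝ) else 0) :
    ∑ v : Fin K → B, (if t (v (pick hK fun k => t (v k))) then (0 : ℝ) else 1) ≤
      Real.exp (-(K * τ)) * Fintype.card (Fin K → B) := by
  have h1 : ∀ v : Fin K → B, (if t (v (pick hK fun k => t (v k))) then (0 : ℝ) else 1) ≤
      ∏ k, (if t (v k) then (0 : ℝ) else 1) := by
    intro v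
    split_ifs with hv
    · exact Finset.prod_nonneg fun k _ => by split_ifs <;> norm_num
    · have : ∀ k, ¬ t (v k) := by
        intro k hk
        exact hv (pick_spec hK (fun k => t (v k)) ⟨k, hk⟩)
      simp [this]
  refine (Finset.sum_le_sum fun v _ => h1 v).trans ?_
  rw [← Fintype.piFinset_univ, ← Finset.prod_univ_sum (fun _ : Fin K => (Finset.univ : Finset B))
    (fun _ b => if t b then (0 : ℝ) else 1)]
  have h2 : ∑ b, (if t b then (0 : ℝ) else 1) ≤ Real.exp (-τ) * Fintype.card B := by
    have : ∑ b, (if t b then (0 : ℝ) else 1) =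
        Fintype.card B - ∑ b, (if t b then (1 : ℝ) else 0) := by
      rw [eq_sub_iff_add_eq, ← Finset.sum_add_distrib]
      simp only [Finset.card_univ.symm, Finset.cast_card]
      exact Finset.sum_congr rfl fun b _ => by split_ifs <;> norm_num
    rw [this]
    have h3 := Real.add_one_le_exp (-τ)
    have : (0 : ℝ) ≤ Fintype.card B := by positivity
    nlinarith
  rw [Finset.prod_const, Finset.card_univ, Fintype.card_fin, Fintype.card_fun, Fintype.card_fin]
  have h0 : (0 : ℝ) ≤ ∑ b, (if t b then (0 : ℝ) else 1) :=
    Finset.sum_nonneg fun k _ => by split_ifs <;> norm_num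
  refine (pow_le_pow_left₀ h0 h2 K).trans (le_of_eq ?_)
  rw [mul_pow, ← Real.exp_nat_mul]
  push_cast
  ring_nf

/-- The selected sample is uniform on the set of elements with property `t`, given that one was
found: exchanging two such elements in all samples does not change the selected index. -/
lemma pick_uniform {B : Type*} [Fintype B] {K : ℕ} (hK : 0 < K) (t G : B → Prop) (η : ℝ)
    (hη : 0 ≤ η)
    (h : (∑ b, if t b ∧ G b then (1 : ℝ) else 0) ≤ η * ∑ b, if t b then (1 : ℝ) else 0) :
    ∑ v : Fin K → B, (if t (v (pick hK fun k => t (v k))) ∧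
      G (v (pick hK fun k => t (v k))) then (1 : ℝ) else 0) ≤
      η * Fintype.card (Fin K → B) := by
  set s : (Fin K → B) → B := fun v => v (pick hK fun k => t (v k)) with hs
  let c : B → ℝ := fun b => ∑ v, if s v = b then (1 : ℝ) else 0
  have hfib : ∀ F : B → ℝ, ∑ v, F (s v) = ∑ b, F b * c b := by
    intro F
    simp only [c, Finset.mul_sum]
    rw [Finset.sum_comm]
    refine Finset.sum_congr rfl fun v _ => ?_
    simp
  have hsym : ∀ b b', t b → t b' → c b = c b' := by
    intro b b' hb hb'
    simp only [c]
    rw [← Equiv.sum_comp (Equiv.arrowCongr (Equiv.refl (Fin K)) (Equiv.swap b b'))]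
    refine Finset.sum_congr rfl fun v _ => ?_
    have hts : ∀ x, t (Equiv.swap b b' x) = t x := by
      intro x
      by_cases h1 : x = b
      · subst h1; simp [hb, hb']
      by_cases h2 : x = b'
      · subst h2; simp [hb, hb']
      rw [Equiv.swap_apply_of_ne_of_ne h1 h2]
    have : s ((Equiv.arrowCongr (Equiv.refl (Fin K)) (Equiv.swap b b')) v) =
        Equiv.swap b b' (s v) := by
      simp [hs, Equiv.arrowCongr, hts]
    rw [this, Equiv.swap_apply_eq_iff, Equiv.swap_apply_left]
  by_cases hex : ∃ b0, t b0
  · obtain ⟨b0, hb0⟩ := hex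
    have hc0 : 0 ≤ c b0 := Finset.sum_nonneg fun v _ => by split_ifs <;> norm_num
    have e1 : ∑ v, (if t (s v) ∧ G (s v) then (1 : ℝ) else 0) =
        (∑ b, if t b ∧ G b then (1 : ℝ) else 0) * c b0 := by
      rw [hfib (fun b => if t b ∧ G b then (1 : ℝ) else 0), Finset.sum_mul]
      refine Finset.sum_congr rfl fun b _ => ?_
      by_cases hb : t b
      · rw [hsym b b0 hb hb0]
      · simp [hb]
    have e2 : ∑ v, (if t (s v) then (1 : ℝ) else 0) =
        (∑ b, if t b then (1 : ℝ) else 0) * c b0 := by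
      rw [hfib (fun b => if t b then (1 : ℝ) else 0), Finset.sum_mul]
      refine Finset.sum_congr rfl fun b _ => ?_
      by_cases hb : t b
      · rw [hsym b b0 hb hb0]
      · simp [hb]
    have e3 : ∑ v, (if t (s v) then (1 : ℝ) else 0) ≤ Fintype.card (Fin K → B) := by
      rw [← Finset.card_univ, Finset.cast_card]
      exact Finset.sum_le_sum fun v _ => by split_ifs <;> norm_num
    change ∑ v, (if t (s v) ∧ G (s v) then (1 : ℝ) else 0) ≤ _
    rw [e1]
    calc _ ≤ (η * ∑ b, if t b then (1 : ℝ) else 0) * c b0 :=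
          mul_le_mul_of_nonneg_right h hc0
      _ = η * ∑ v, (if t (s v) then (1 : ℝ) else 0) := by rw [e2]; ring
      _ ≤ _ := mul_le_mul_of_nonneg_left e3 hη
  · push Not at hex
    simp only [hex, false_and, if_false, Finset.sum_const_zero]
    positivity

set_option maxHeartbeats 400000 in
/-- One-shot achievability. Codewords `x m₁ : A` and `u m₂ k : B` are drawn uniformly; the
facilitator looks for `k` with `T (x m₁) (u m₂ k)`. The decoder first looks for the unique `m₁`
passing the test `D1`, then for the unique `m₂` passing `D2` together with `x m₁`. -/
theorem oneShot {A B Z : Type*} [Fintype A] [Nonempty A] [Fintype B] [Nonempty B] [Fintype Z]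
    (V : A → B → Z → ℝ) (hV0 : ∀ a b z, 0 ≤ V a b z) (hV1 : ∀ a b, ∑ z, V a b z = 1)
    (T : A → B → Prop) (D1 : A → Z → Prop) (D2 : A → B → Z → Prop)
    (δ1 δ2 η1 η2 τ : ℝ) (hδ1' : 0 ≤ δ1) (hδ2' : 0 ≤ δ2) (hη2' : 0 ≤ η2)
    (hδ1 : ∀ a b, T a b → ∑ z, V a b z * (if D1 a z then 0 else 1) ≤ δ1)
    (hδ2 : ∀ a b, T a b → ∑ z, V a b z * (if D2 a b z then 0 else 1) ≤ δ2)
    (hη1 : ∀ z, (∑ a, if D1 a z then (1 : ℝ) else 0) ≤ η1 * Fintype.card A)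
    (hη2 : ∀ a z, (∑ b, if T a b ∧ D2 a b z then (1 : ℝ) else 0) ≤
      η2 * ∑ b, if T a b then (1 : ℝ) else 0)
    (hτ : ∀ a, τ * Fintype.card B ≤ ∑ b, if T a b then (1 : ℝ) else 0)
    (M1 M2 K : ℕ) (hM1 : 0 < M1) (hM2 : 0 < M2) (hK : 0 < K) :
    ∃ (x : Fin M1 → A) (u : Fin M2 → Fin K → B) (e : Fin M1 → Fin M2 → Fin K)
      (g : Z → Fin M1 × Fin M2),
      (1 / ((M1 : ℝ) * M2)) * ∑ m1, ∑ m2, ∑ z, V (x m1) (u m2 (e m1 m2)) z *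
        (if g z = (m1, m2) then 0 else 1) ≤
      δ1 + δ2 + (M1 - 1) * η1 + (M2 - 1) * η2 + Real.exp (-(K * τ)) := by
  let s : A → (Fin K → B) → B := fun a v => v (pick hK fun k => T a (v k))
  let Good : (Fin M1 → A) → (Fin M2 → Fin K → B) → Z → Fin M1 × Fin M2 → Prop :=
    fun x u z m => D1 (x m.1) z ∧ (∀ m' , m' ≠ m.1 → ¬ D1 (x m') z) ∧
      D2 (x m.1) (s (x m.1) (u m.2)) z ∧
      ∀ m', m' ≠ m.2 → ¬ (T (x m.1) (s (x m.1) (u m')) ∧ D2 (x m.1) (s (x m.1) (u m')) z)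
  let m0 : Fin M1 × Fin M2 := (⟨0, hM1⟩, ⟨0, hM2⟩)
  let g : (Fin M1 → A) → (Fin M2 → Fin K → B) → Z → Fin M1 × Fin M2 := fun x u z =>
    if h : ∃ m, T (x m.1) (s (x m.1) (u m.2)) ∧ Good x u z m then h.choose else m0
  have hg : ∀ x u z m, T (x m.1) (s (x m.1) (u m.2)) → Good x u z m → g x u z = m := by
    intro x u z m hT hm
    have hex : ∃ m, T (x m.1) (s (x m.1) (u m.2)) ∧ Good x u z m := ⟨m, hT, hm⟩
    have hc := hex.choose_spec
    simp only [g]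
    rw [dif_pos hex]
    set m' := hex.choose
    obtain ⟨hT', h1', h2', h3', h4'⟩ := hc
    obtain ⟨h1, h2, h3, h4⟩ := hm
    have e1 : m'.1 = m.1 := by
      by_contra hne
      exact h2 _ hne h1'
    have e2 : m'.2 = m.2 := by
      by_contra hne
      rw [e1] at hT' h3'
      exact h4 _ hne ⟨hT', h3'⟩
    exact Prod.ext e1 e2
  set bd : ℝ := δ1 + δ2 + (M1 - 1) * η1 + (M2 - 1) * η2 + Real.exp (-(K * τ)) with hbd
  let err : (Fin M1 → A) → (Fin M2 → Fin K → B) → Fin M1 → Fin M2 → ℝ := fun x u m1 m2 =>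
    ∑ z, V (x m1) (s (x m1) (u m2)) z * (if g x u z = (m1, m2) then 0 else 1)
  -- the five sources of error
  have hpt : ∀ x u m1 m2, err x u m1 m2 ≤ (if T (x m1) (s (x m1) (u m2)) then 0 else 1) +
      δ1 + δ2 + ∑ m' ∈ Finset.univ.erase m1, ∑ z, V (x m1) (s (x m1) (u m2)) z *
        (if D1 (x m') z then 1 else 0) +
      ∑ m' ∈ Finset.univ.erase m2, ∑ z, V (x m1) (s (x m1) (u m2)) z *
        (if T (x m1) (s (x m1) (u m')) ∧ D2 (x m1) (s (x m1) (u m')) z then 1 else 0) := by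
    intro x u m1 m2
    have p4 : 0 ≤ ∑ m' ∈ Finset.univ.erase m1, ∑ z, V (x m1) (s (x m1) (u m2)) z *
        (if D1 (x m') z then 1 else 0) :=
      Finset.sum_nonneg fun m' _ => Finset.sum_nonneg fun z _ =>
        mul_nonneg (hV0 _ _ _) (by split_ifs <;> norm_num)
    have p5 : 0 ≤ ∑ m' ∈ Finset.univ.erase m2, ∑ z, V (x m1) (s (x m1) (u m2)) z *
        (if T (x m1) (s (x m1) (u m')) ∧ D2 (x m1) (s (x m1) (u m')) z then (1 : ℝ) else 0) :=
      Finset.sum_nonneg fun m' _ => Finset.sum_nonneg fun z _ =>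
        mul_nonneg (hV0 _ _ _) (by split_ifs <;> norm_num)
    by_cases hT : T (x m1) (s (x m1) (u m2))
    · rw [if_pos hT]
      have q1 := hδ1 _ _ hT
      have q2 := hδ2 _ _ hT
      have : err x u m1 m2 ≤ ∑ z, V (x m1) (s (x m1) (u m2)) z * (if D1 (x m1) z then 0 else 1) +
        ∑ z, V (x m1) (s (x m1) (u m2)) z *
          (if D2 (x m1) (s (x m1) (u m2)) z then 0 else 1) +
        ∑ m' ∈ Finset.univ.erase m1, ∑ z, V (x m1) (s (x m1) (u m2)) z *
        (if D1 (x m') z then 1 else 0) +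
        ∑ m' ∈ Finset.univ.erase m2, ∑ z, V (x m1) (s (x m1) (u m2)) z *
        (if T (x m1) (s (x m1) (u m')) ∧ D2 (x m1) (s (x m1) (u m')) z then 1 else 0) := by
        rw [Finset.sum_comm (s := Finset.univ.erase m1), Finset.sum_comm (s := Finset.univ.erase m2),
          ← Finset.sum_add_distrib, ← Finset.sum_add_distrib, ← Finset.sum_add_distrib]
        refine Finset.sum_le_sum fun z _ => ?_
        rw [← Finset.mul_sum, ← Finset.mul_sum, ← mul_add, ← mul_add, ← mul_add]
        refine mul_le_mul_of_nonneg_left ?_ (hV0 _ _ _)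
        have n3 : ∀ m' ∈ Finset.univ.erase m1, (0 : ℝ) ≤ (if D1 (x m') z then 1 else 0) :=
          fun m' _ => by split_ifs <;> norm_num
        have n4 : ∀ m' ∈ Finset.univ.erase m2, (0 : ℝ) ≤
            (if T (x m1) (s (x m1) (u m')) ∧ D2 (x m1) (s (x m1) (u m')) z then 1 else 0) :=
          fun m' _ => by split_ifs <;> norm_num
        have n1 : (0 : ℝ) ≤ (if D1 (x m1) z then 0 else 1) := by split_ifs <;> norm_num
        have n2 : (0 : ℝ) ≤ (if D2 (x m1) (s (x m1) (u m2)) z then 0 else 1) := by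
          split_ifs <;> norm_num
        have N3 := Finset.sum_nonneg n3
        have N4 := Finset.sum_nonneg n4
        by_cases hG : g x u z = (m1, m2)
        · rw [if_pos hG]; positivity
        rw [if_neg hG]
        by_cases h1 : D1 (x m1) z
        swap
        · rw [if_neg h1]; linarith
        by_cases h2 : D2 (x m1) (s (x m1) (u m2)) z
        swap
        · rw [if_neg h2]; linarith
        by_cases h3 : ∀ m' , m' ≠ m1 → ¬ D1 (x m') z
        swap
        · push Not at h3
          obtain ⟨m', hm', h3⟩ := h3
          have := Finset.single_le_sum n3 (Finset.mem_erase.2 ⟨hm', Finset.mem_univ m'⟩)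
          rw [if_pos h3] at this
          linarith
        by_cases h4 : ∀ m', m' ≠ m2 →
          ¬ (T (x m1) (s (x m1) (u m')) ∧ D2 (x m1) (s (x m1) (u m')) z)
        · exact absurd (hg x u z (m1, m2) hT ⟨h1, h3, h2, h4⟩) hG
        · push Not at h4
          obtain ⟨m', hm', h4⟩ := h4
          have := Finset.single_le_sum n4 (Finset.mem_erase.2 ⟨hm', Finset.mem_univ m'⟩)
          rw [if_pos h4] at this
          linarith
      linarith
    · rw [if_neg hT]
      have : err x u m1 m2 ≤ 1 := by
        rw [← hV1 (x m1) (s (x m1) (u m2))]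
        refine Finset.sum_le_sum fun z _ => ?_
        refine mul_le_of_le_one_right (hV0 _ _ _) (by split_ifs <;> norm_num)
      linarith
  set cA : ℝ := (Fintype.card (Fin M1 → A) : ℝ) with hcA
  set cB : ℝ := (Fintype.card (Fin M2 → Fin K → B) : ℝ) with hcB
  have hcA0 : 0 < cA := by rw [hcA]; exact_mod_cast Fintype.card_pos
  have hcB0 : 0 < cB := by rw [hcB]; exact_mod_cast Fintype.card_pos
  have hcard1 : ∀ m1 : Fin M1, ((Finset.univ.erase m1).card : ℝ) = M1 - 1 := by
    intro m1
    rw [Finset.card_erase_of_mem (Finset.mem_univ _), Finset.card_univ, Fintype.card_fin,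
      Nat.cast_sub hM1]
    simp
  have hcard2 : ∀ m2 : Fin M2, ((Finset.univ.erase m2).card : ℝ) = M2 - 1 := by
    intro m2
    rw [Finset.card_erase_of_mem (Finset.mem_univ _), Finset.card_univ, Fintype.card_fin,
      Nat.cast_sub hM2]
    simp
  have havg : ∀ m1 m2, ∑ x, ∑ u, err x u m1 m2 ≤ bd * (cA * cB) := by
    intro m1 m2
    have t1 : ∑ x : Fin M1 → A, ∑ u : Fin M2 → Fin K → B,
        (if T (x m1) (s (x m1) (u m2)) then (0 : ℝ) else 1) ≤
        Real.exp (-(K * τ)) * (cA * cB) := by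
      calc _ ≤ ∑ x : Fin M1 → A, Real.exp (-(K * τ)) * cB := by
            refine Finset.sum_le_sum fun x _ => ?_
            refine sum_pi_le m2 _ _ fun u => ?_
            simp only [Function.update_self]
            exact fail_le hK (T (x m1)) τ (hτ _)
        _ = _ := by
            rw [Finset.sum_const, Finset.card_univ, nsmul_eq_mul, ← hcA]; ring
    have t4 : ∀ m' ∈ Finset.univ.erase m1, ∑ x : Fin M1 → A, ∑ u : Fin M2 → Fin K → B,
        ∑ z, V (x m1) (s (x m1) (u m2)) z * (if D1 (x m') z then 1 else 0) ≤
        η1 * (cA * cB) := by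
      intro m' hm'
      have hne : m1 ≠ m' := (Finset.ne_of_mem_erase hm').symm
      rw [Finset.sum_comm]
      calc _ ≤ ∑ u : Fin M2 → Fin K → B, η1 * cA := by
            refine Finset.sum_le_sum fun u _ => ?_
            refine sum_pi_le m' _ _ fun x => ?_
            simp only [Function.update_self, Function.update_of_ne hne]
            rw [Finset.sum_comm]
            calc _ ≤ ∑ z, V (x m1) (s (x m1) (u m2)) z * (η1 * Fintype.card A) := by
                  refine Finset.sum_le_sum fun z _ => ?_
                  rw [← Finset.mul_sum]
                  exact mul_le_mul_of_nonneg_left (hη1 z) (hV0 _ _ _)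
              _ = _ := by rw [← Finset.sum_mul, hV1, one_mul]
        _ = _ := by
            rw [Finset.sum_const, Finset.card_univ, nsmul_eq_mul, ← hcB]; ring
    have t5 : ∀ m' ∈ Finset.univ.erase m2, ∑ x : Fin M1 → A, ∑ u : Fin M2 → Fin K → B,
        ∑ z, V (x m1) (s (x m1) (u m2)) z *
        (if T (x m1) (s (x m1) (u m')) ∧ D2 (x m1) (s (x m1) (u m')) z then 1 else 0) ≤
        η2 * (cA * cB) := by
      intro m' hm'
      have hne : m2 ≠ m' := (Finset.ne_of_mem_erase hm').symm
      calc _ ≤ ∑ x : Fin M1 → A, η2 * cB := by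
            refine Finset.sum_le_sum fun x _ => ?_
            refine sum_pi_le m' _ _ fun u => ?_
            simp only [Function.update_self, Function.update_of_ne hne]
            rw [Finset.sum_comm]
            calc _ ≤ ∑ z, V (x m1) (s (x m1) (u m2)) z * (η2 * Fintype.card (Fin K → B)) := by
                  refine Finset.sum_le_sum fun z _ => ?_
                  rw [← Finset.mul_sum]
                  exact mul_le_mul_of_nonneg_left
                    (pick_uniform hK (T (x m1)) (fun b => D2 (x m1) b z) η2 hη2' (hη2 _ z))
                    (hV0 _ _ _)
              _ = _ := by rw [← Finset.sum_mul, hV1, one_mul]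
        _ = _ := by
            rw [Finset.sum_const, Finset.card_univ, nsmul_eq_mul, ← hcA]; ring
    have t23 : ∀ δ : ℝ, ∑ x : Fin M1 → A, ∑ u : Fin M2 → Fin K → B, δ = δ * (cA * cB) := by
      intro δ
      simp only [Finset.sum_const, Finset.card_univ, nsmul_eq_mul, ← hcA, ← hcB]; ring
    have T4 : ∑ x : Fin M1 → A, ∑ u : Fin M2 → Fin K → B, ∑ m' ∈ Finset.univ.erase m1,
        ∑ z, V (x m1) (s (x m1) (u m2)) z * (if D1 (x m') z then 1 else 0) ≤
        (M1 - 1) * η1 * (cA * cB) := by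
      have := Finset.sum_le_sum t4
      rw [Finset.sum_const, nsmul_eq_mul, hcard1] at this
      refine le_trans (le_of_eq ?_) (this.trans (le_of_eq (by ring)))
      symm
      rw [Finset.sum_comm]
      refine Finset.sum_congr rfl fun x _ => ?_
      rw [Finset.sum_comm]
    have T5 : ∑ x : Fin M1 → A, ∑ u : Fin M2 → Fin K → B, ∑ m' ∈ Finset.univ.erase m2,
        ∑ z, V (x m1) (s (x m1) (u m2)) z *
        (if T (x m1) (s (x m1) (u m')) ∧ D2 (x m1) (s (x m1) (u m')) z then 1 else 0) ≤
        (M2 - 1) * η2 * (cA * cB) := by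
      have := Finset.sum_le_sum t5
      rw [Finset.sum_const, nsmul_eq_mul, hcard2] at this
      refine le_trans (le_of_eq ?_) (this.trans (le_of_eq (by ring)))
      symm
      rw [Finset.sum_comm]
      refine Finset.sum_congr rfl fun x _ => ?_
      rw [Finset.sum_comm]
    refine (Finset.sum_le_sum fun x _ => Finset.sum_le_sum fun u _ => hpt x u m1 m2).trans ?_
    simp only [Finset.sum_add_distrib]
    rw [t23, t23, hbd]
    linarith
  have hM1' : (0 : ℝ) < M1 := by exact_mod_cast hM1
  have hM2' : (0 : ℝ) < M2 := by exact_mod_cast hM2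
  -- some codebook is at least as good as the average one
  have hexi : ∃ c ∈ (Finset.univ : Finset ((Fin M1 → A) × (Fin M2 → Fin K → B))),
      ∑ m1, ∑ m2, err c.1 c.2 m1 m2 ≤ M1 * M2 * bd := by
    refine Finset.exists_le_of_sum_le Finset.univ_nonempty ?_
    rw [Finset.sum_const, Finset.card_univ, Fintype.card_prod, nsmul_eq_mul]
    push_cast
    rw [← hcA, ← hcB, Fintype.sum_prod_type]
    calc _ = ∑ m1, ∑ m2, ∑ x, ∑ u, err x u m1 m2 := by
          calc _ = ∑ x, ∑ m1, ∑ m2, ∑ u, err x u m1 m2 := by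
                refine Finset.sum_congr rfl fun x _ => ?_
                rw [Finset.sum_comm]
                refine Finset.sum_congr rfl fun m1 _ => ?_
                rw [Finset.sum_comm]
            _ = _ := by
                rw [Finset.sum_comm]
                refine Finset.sum_congr rfl fun m1 _ => ?_
                rw [Finset.sum_comm]
      _ ≤ ∑ m1 : Fin M1, ∑ m2 : Fin M2, bd * (cA * cB) :=
          Finset.sum_le_sum fun m1 _ => Finset.sum_le_sum fun m2 _ => havg m1 m2
      _ = _ := by
          simp only [Finset.sum_const, Finset.card_univ, nsmul_eq_mul, Fintype.card_fin]; ring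
  obtain ⟨⟨x, u⟩, -, hc⟩ := hexi
  refine ⟨x, u, fun m1 m2 => pick hK fun k => T (x m1) (u m2 k), g x u, ?_⟩
  rw [one_div, inv_mul_le_iff₀ (by positivity)]
  exact hc

/-! ### Product distributions: change of measure and Chebyshev -/

lemma sum_pi_prod {ι Z : Type*} [Fintype ι] [DecidableEq ι] [Fintype Z] (f : ι → Z → ℝ) :
    ∑ y : ι → Z, ∏ i, f i (y i) = ∏ i, ∑ z, f i z := by
  rw [← Fintype.piFinset_univ, ← Finset.prod_univ_sum]

/-- Under the product of the weights `p i`, the likelihood `∏ Q` exceeds `t` times its mean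
`∏ R` with probability at most `1 / t`. -/
lemma markov_prod {ι X : Type*} [Fintype ι] [DecidableEq ι] [Fintype X] (p Q : ι → X → ℝ)
    (hp : ∀ i x, 0 ≤ p i x) (hQ : ∀ i x, 0 ≤ Q i x) (R : ι → ℝ)
    (hR : ∀ i, R i = ∑ x, p i x * Q i x) (t : ℝ) (ht : 0 < t) :
    ∑ f : ι → X, (∏ i, p i (f i)) * (if t * ∏ i, R i < ∏ i, Q i (f i) then 1 else 0) ≤ 1 / t := by
  have hsum : ∑ f : ι → X, (∏ i, p i (f i)) * ∏ i, Q i (f i) = ∏ i, R i := by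
    simp only [hR, ← Finset.prod_mul_distrib]
    exact sum_pi_prod fun i x => p i x * Q i x
  have hR0 : ∀ i, 0 ≤ R i := fun i => by
    rw [hR]; exact Finset.sum_nonneg fun x _ => mul_nonneg (hp _ _) (hQ _ _)
  have hpp : ∀ f : ι → X, 0 ≤ ∏ i, p i (f i) := fun f => Finset.prod_nonneg fun i _ => hp _ _
  have hQQ : ∀ f : ι → X, 0 ≤ ∏ i, Q i (f i) := fun f => Finset.prod_nonneg fun i _ => hQ _ _
  rcases (Finset.prod_nonneg fun i (_ : i ∈ Finset.univ) => hR0 i).eq_or_lt with h0 | hpos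
  · rw [← h0] at hsum ⊢
    rw [Finset.sum_eq_zero_iff_of_nonneg fun f _ => mul_nonneg (hpp f) (hQQ f)] at hsum
    rw [Finset.sum_eq_zero]
    · positivity
    intro f hf
    rcases mul_eq_zero.1 (hsum f hf) with h | h <;> simp [h]
  · rw [le_div_iff₀ ht]
    refine le_of_mul_le_mul_right ?_ hpos
    rw [one_mul]
    calc _ = ∑ f : ι → X, (∏ i, p i (f i)) *
          ((if t * ∏ i, R i < ∏ i, Q i (f i) then 1 else 0) * (t * ∏ i, R i)) := by
          rw [Finset.sum_mul, Finset.sum_mul]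
          exact Finset.sum_congr rfl fun f _ => by ring
      _ ≤ ∑ f : ι → X, (∏ i, p i (f i)) * ∏ i, Q i (f i) := by
          refine Finset.sum_le_sum fun f _ => mul_le_mul_of_nonneg_left ?_ (hpp f)
          split_ifs with h
          · linarith
          · simpa using hQQ f
      _ = _ := hsum

/-- Variances of independent centred terms add up. -/
lemma second_moment_prod {ι Z : Type*} [Fintype ι] [DecidableEq ι] [Fintype Z] (w ψ : ι → Z → ℝ)
    (hw1 : ∀ i, ∑ z, w i z = 1) (hψ : ∀ i, ∑ z, w i z * ψ i z = 0) :
    ∑ y : ι → Z, (∏ i, w i (y i)) * (∑ i, ψ i (y i)) ^ 2 = ∑ i, ∑ z, w i z * ψ i z ^ 2 := by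
  have key : ∀ i j, ∑ y : ι → Z, (∏ k, w k (y k)) * (ψ i (y i) * ψ j (y j)) =
      if i = j then ∑ z, w i z * ψ i z ^ 2 else 0 := by
    intro i j
    have h1 : ∀ y : ι → Z, (∏ k, w k (y k)) * (ψ i (y i) * ψ j (y j)) =
        ∏ k, (w k (y k) * ((if k = i then ψ k (y k) else 1) * (if k = j then ψ k (y k) else 1))) := by
      intro y
      rw [Finset.prod_mul_distrib, Finset.prod_mul_distrib]
      simp
    simp only [h1]
    rw [sum_pi_prod fun k z => w k z * ((if k = i then ψ k z else 1) * (if k = j then ψ k z else 1))]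
    split_ifs with hij
    · subst hij
      rw [Finset.prod_eq_single i]
      · simp [sq]
      · intro k _ hk
        simp [hk, hw1]
      · simp
    · refine Finset.prod_eq_zero (Finset.mem_univ i) ?_
      simp [hij, hψ]
  calc _ = ∑ y : ι → Z, ∑ i, ∑ j, (∏ k, w k (y k)) * (ψ i (y i) * ψ j (y j)) := by
        refine Finset.sum_congr rfl fun y _ => ?_
        rw [sq, Finset.sum_mul_sum, Finset.mul_sum]
        exact Finset.sum_congr rfl fun i _ => by rw [Finset.mul_sum]
    _ = ∑ i, ∑ j, ∑ y : ι → Z, (∏ k, w k (y k)) * (ψ i (y i) * ψ j (y j)) := by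
        rw [Finset.sum_comm]
        refine Finset.sum_congr rfl fun i _ => ?_
        rw [Finset.sum_comm]
    _ = _ := by
        simp [key]

lemma chebyshev_prod {ι Z : Type*} [Fintype ι] [DecidableEq ι] [Fintype Z] (w φ : ι → Z → ℝ)
    (hw0 : ∀ i z, 0 ≤ w i z) (hw1 : ∀ i, ∑ z, w i z = 1) (s : ℝ) (hs : 0 < s) :
    ∑ y : ι → Z, (∏ i, w i (y i)) *
      (if ∑ i, φ i (y i) ≤ ∑ i, ∑ z, w i z * φ i z - s then 1 else 0) ≤
      (∑ i, ∑ z, w i z * φ i z ^ 2) / s ^ 2 := by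
  let μ : ι → ℝ := fun i => ∑ z, w i z * φ i z
  have h0 : ∀ i, ∑ z, w i z * (φ i z - μ i) = 0 := by
    intro i
    simp only [mul_sub, Finset.sum_sub_distrib, ← Finset.sum_mul, hw1]
    simp [μ]
  have h2 := second_moment_prod w (fun i z => φ i z - μ i) hw1 h0
  have h3 : ∀ i, ∑ z, w i z * (φ i z - μ i) ^ 2 ≤ ∑ z, w i z * φ i z ^ 2 := by
    intro i
    have aux : ∀ m : ℝ, ∑ z, w i z * (φ i z - m) ^ 2 =
        ∑ z, w i z * φ i z ^ 2 - 2 * m * ∑ z, w i z * φ i z + m ^ 2 * ∑ z, w i z := by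
      intro m
      rw [Finset.mul_sum, Finset.mul_sum, ← Finset.sum_sub_distrib, ← Finset.sum_add_distrib]
      exact Finset.sum_congr rfl fun z _ => by ring
    rw [aux, hw1]
    have : ∑ z, w i z * φ i z = μ i := rfl
    rw [this]
    nlinarith [sq_nonneg (μ i)]
  rw [le_div_iff₀ (by positivity), Finset.sum_mul]
  refine le_trans ?_ (h2.le.trans (Finset.sum_le_sum fun i _ => h3 i))
  refine Finset.sum_le_sum fun y _ => ?_
  rw [mul_assoc]
  refine mul_le_mul_of_nonneg_left ?_ (Finset.prod_nonneg fun i _ => hw0 _ _)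
  split_ifs with h
  · rw [Finset.sum_sub_distrib]
    have : s ≤ ∑ i, μ i - ∑ i, φ i (y i) := by simp only [μ]; linarith
    nlinarith
  · rw [zero_mul]; positivity

/-! ### Counting permutations -/

lemma pow_self_le_factorial_mul_exp (k : ℕ) : (k : ℝ) ^ k ≤ k.factorial * Real.exp k := by
  have := Real.pow_div_factorial_le_exp (x := (k : ℝ)) (by positivity) k
  rw [div_le_iff₀ (by positivity)] at this
  linarith

lemma factorial_mul_exp_le (k n : ℕ) (hk : k ≤ n) (hn : 1 ≤ n) :
    (k.factorial : ℝ) * Real.exp k ≤ Real.exp 1 * n * (k : ℝ) ^ k := by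
  have main : ∀ k : ℕ, 1 ≤ k →
      (k.factorial : ℝ) * Real.exp k ≤ Real.exp 1 * k * (k : ℝ) ^ k := by
    intro k hk
    induction k, hk using Nat.le_induction with
    | base => simp
    | succ k hk ih =>
      have hk0 : (0 : ℝ) < k := by exact_mod_cast hk
      -- `(1 + 1/k)^(k+1) ≥ e`
      have h1 : Real.exp 1 * (k : ℝ) ^ (k + 1) ≤ ((k : ℝ) + 1) ^ (k + 1) := by
        have h2 : (1 : ℝ) / (k + 1) ≤ Real.log ((k + 1) / k) := by
          have := Real.one_sub_inv_le_log_of_pos (x := ((k : ℝ) + 1) / k) (by positivity)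
          refine le_trans (le_of_eq ?_) this
          field_simp
          ring
        have h3 : Real.exp 1 ≤ (((k : ℝ) + 1) / k) ^ (k + 1) := by
          rw [← Real.log_le_log_iff (Real.exp_pos 1) (by positivity), Real.log_exp, Real.log_pow]
          rw [div_le_iff₀ (by positivity)] at h2
          push_cast
          linarith
        rw [div_pow, le_div_iff₀ (by positivity)] at h3
        exact h3
      rw [Nat.factorial_succ]
      push_cast
      rw [Real.exp_add]
      calc ((k : ℝ) + 1) * k.factorial * (Real.exp k * Real.exp 1)
          = ((k : ℝ) + 1) * Real.exp 1 * (k.factorial * Real.exp k) := by ring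
        _ ≤ ((k : ℝ) + 1) * Real.exp 1 * (Real.exp 1 * k * (k : ℝ) ^ k) := by gcongr
        _ = ((k : ℝ) + 1) * Real.exp 1 * (Real.exp 1 * (k : ℝ) ^ (k + 1)) := by ring
        _ ≤ ((k : ℝ) + 1) * Real.exp 1 * ((k : ℝ) + 1) ^ (k + 1) := by gcongr
        _ = _ := by ring
  rcases Nat.eq_zero_or_pos k with rfl | hk0
  · have h1 : (1 : ℝ) ≤ n := by exact_mod_cast hn
    have h2 := Real.add_one_le_exp (1 : ℝ)
    simp
    nlinarith
  · refine (main k hk0).trans ?_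
    gcongr

/-- The number of occurrences of `z` in the sequence `g`. -/
def cnt {n : ℕ} {Z : Type*} (g : Fin n → Z) (z : Z) : ℕ := Fintype.card {i // g i = z}

/-- The empirical distribution (type) of the sequence `g`. -/
def emp {n : ℕ} {Z : Type*} (g : Fin n → Z) (z : Z) : ℝ := (cnt g z : ℝ) / n

/-- The number of permutations of the coordinates that fix the sequence `g`. -/
def stab {n : ℕ} {Z : Type*} (g : Fin n → Z) : ℕ :=
  (Finset.univ.filter fun π : Equiv.Perm (Fin n) => g ∘ π = g).card

/-- The probability of the sequence `g` under the product of its own empirical distribution. -/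
def selfProb {n : ℕ} {Z : Type*} (g : Fin n → Z) : ℝ := ∏ i, emp g (g i)

lemma stab_eq_card {n : ℕ} {Z : Type*} (g : Fin n → Z)
    [DecidablePred fun π : Equiv.Perm (Fin n) => g ∘ π = g] :
    stab g = (Finset.univ.filter fun π : Equiv.Perm (Fin n) => g ∘ π = g).card := by
  unfold stab
  congr!

lemma stab_pos {n : ℕ} {Z : Type*} (g : Fin n → Z) : 0 < stab g :=
  Finset.card_pos.2 ⟨1, by simp⟩

lemma stab_eq {n : ℕ} {Z : Type*} [Fintype Z] (g : Fin n → Z) :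
    stab g = ∏ z, (cnt g z).factorial := by
  have := DomMulAct.stabilizer_card g
  unfold stab cnt
  rw [← this, Fintype.card_subtype]

lemma cnt_pos {n : ℕ} {Z : Type*} (g : Fin n → Z) (i : Fin n) : 0 < cnt g (g i) :=
  Fintype.card_pos_iff.2 ⟨⟨i, rfl⟩⟩

lemma cnt_le {n : ℕ} {Z : Type*} (g : Fin n → Z) (z : Z) : cnt g z ≤ n := by
  have := Fintype.card_subtype_le (fun i => g i = z)
  simpa [cnt] using this

lemma cnt_eq_sum {n : ℕ} {Z : Type*} (g : Fin n → Z) (z : Z) :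
    (cnt g z : ℝ) = ∑ i, if g i = z then (1 : ℝ) else 0 := by
  unfold cnt
  rw [Fintype.card_subtype, Finset.cast_card, Finset.sum_filter]

lemma sum_comp_eq {n : ℕ} {Z : Type*} [Fintype Z] (g : Fin n → Z) (F : Z → ℝ) :
    ∑ i, F (g i) = ∑ z, cnt g z * F z := by
  simp only [cnt_eq_sum, Finset.sum_mul]
  rw [Finset.sum_comm]
  simp

lemma prod_comp_eq {n : ℕ} {Z : Type*} [Fintype Z] (g : Fin n → Z) (F : Z → ℝ) :
    ∏ i, F (g i) = ∏ z, F z ^ cnt g z := by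
  rw [← Finset.prod_fiberwise (s := Finset.univ) (g := g)]
  refine Finset.prod_congr rfl fun z _ => ?_
  rw [Finset.prod_congr rfl (g := fun _ => F z)]
  · rw [Finset.prod_const]
    simp [cnt, Fintype.card_subtype]
  · intro i hi
    rw [(Finset.mem_filter.1 hi).2]

lemma sum_cnt {n : ℕ} {Z : Type*} [Fintype Z] (g : Fin n → Z) : ∑ z, cnt g z = n := by
  have := sum_comp_eq g (fun _ => 1)
  simp at this
  exact_mod_cast this.symm

lemma emp_pos {n : ℕ} {Z : Type*} (g : Fin n → Z) (i : Fin n) : 0 < emp g (g i) := by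
  have hn : 0 < n := i.pos
  have := cnt_pos g i
  unfold emp
  positivity

lemma emp_nonneg {n : ℕ} {Z : Type*} (g : Fin n → Z) (z : Z) : 0 ≤ emp g z := by
  unfold emp
  positivity

lemma emp_isPMF {n : ℕ} (hn : 0 < n) {Z : Type*} [Fintype Z] (g : Fin n → Z) : IsPMF (emp g) := by
  refine ⟨emp_nonneg g, ?_⟩
  unfold emp
  rw [← Finset.sum_div, div_eq_one_iff_eq (by positivity)]
  exact_mod_cast sum_cnt g

lemma selfProb_pos {n : ℕ} {Z : Type*} (g : Fin n → Z) : 0 < selfProb g :=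
  Finset.prod_pos fun i _ => emp_pos g i

lemma selfProb_mul {n : ℕ} (hn : 0 < n) {Z : Type*} [Fintype Z] (g : Fin n → Z) :
    selfProb g * (n : ℝ) ^ n = ∏ z, (cnt g z : ℝ) ^ cnt g z := by
  have hn' : (0 : ℝ) < n := by exact_mod_cast hn
  unfold selfProb
  rw [prod_comp_eq g (emp g)]
  simp only [emp, div_pow]
  rw [Finset.prod_div_distrib, Finset.prod_pow_eq_pow_sum, sum_cnt, div_mul_cancel₀]
  positivity

/-- The cardinality `n! / stab g` of the type class of `g` is at most `1 / selfProb g`, up to a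
factor polynomial in `n`. -/
lemma selfProb_le {n : ℕ} (hn : 0 < n) {Z : Type*} [Fintype Z] (g : Fin n → Z) :
    selfProb g * (n : ℝ) ^ n ≤ stab g * Real.exp n := by
  rw [selfProb_mul hn, stab_eq]
  have : Real.exp n = ∏ z, Real.exp (cnt g z) := by
    rw [← Real.exp_sum]
    congr 1
    exact_mod_cast (sum_cnt g).symm
  rw [this]
  push_cast
  rw [← Finset.prod_mul_distrib]
  exact Finset.prod_le_prod (fun z _ => by positivity)
    fun z _ => pow_self_le_factorial_mul_exp _

/-- The type class of `g` has cardinality at least `1 / selfProb g`, up to a factor polynomial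
in `n`. -/
lemma stab_le {n : ℕ} (hn : 0 < n) {Z : Type*} [Fintype Z] (g : Fin n → Z) :
    stab g * Real.exp n ≤ (Real.exp 1 * n) ^ Fintype.card Z * (selfProb g * (n : ℝ) ^ n) := by
  rw [selfProb_mul hn, stab_eq]
  have : Real.exp n = ∏ z, Real.exp (cnt g z) := by
    rw [← Real.exp_sum]
    congr 1
    exact_mod_cast (sum_cnt g).symm
  rw [this]
  push_cast
  rw [← Finset.prod_mul_distrib, ← Finset.card_univ, ← Finset.prod_const,
    ← Finset.prod_mul_distrib]
  exact Finset.prod_le_prod (fun z _ => by positivity)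
    fun z _ => factorial_mul_exp_le _ n (cnt_le g z) hn

/-- Each rearrangement of `g` is hit by the same number `stab g` of permutations, so averages over
permutations are dominated by sums over all sequences. -/
lemma sum_perm_le {n : ℕ} {Z : Type*} [Fintype Z] (g : Fin n → Z) (F : (Fin n → Z) → ℝ)
    (hF : ∀ f, 0 ≤ F f) :
    ∑ σ : Equiv.Perm (Fin n), F (g ∘ σ) ≤ stab g * ∑ f, F f := by
  have h1 : ∑ σ : Equiv.Perm (Fin n), F (g ∘ σ) =
      ∑ f, ((Finset.univ.filter fun σ : Equiv.Perm (Fin n) => g ∘ σ = f).card : ℝ) * F f := by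
    rw [← Finset.sum_fiberwise (s := Finset.univ) (g := fun σ : Equiv.Perm (Fin n) => g ∘ σ)]
    refine Finset.sum_congr rfl fun f _ => ?_
    rw [Finset.sum_congr rfl (g := fun _ => F f)]
    · rw [Finset.sum_const, nsmul_eq_mul]
    · intro σ hσ
      rw [(Finset.mem_filter.1 hσ).2]
  rw [h1, Finset.mul_sum]
  refine Finset.sum_le_sum fun f _ => mul_le_mul_of_nonneg_right ?_ (hF f)
  norm_cast
  by_cases he : ∃ σ0 : Equiv.Perm (Fin n), g ∘ σ0 = f
  · obtain ⟨σ0, h0⟩ := he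
    refine Finset.card_le_card_of_injOn (fun σ => σ * σ0⁻¹) ?_ ?_
    · intro σ hσ
      have hσ' : g ∘ σ = f := by simpa using hσ
      have : g ∘ (σ * σ0⁻¹ : Equiv.Perm (Fin n)) = g := by
        funext i
        have e1 := congrFun (hσ'.trans h0.symm) (σ0⁻¹ i)
        simpa using e1
      simpa using this
    · intro a _ b _ hab
      simpa using hab
  · push Not at he
    rw [Finset.filter_false_of_mem]
    · simp
    · intro σ _
      exact he σ

/-- The pairs of sequences obtained by permuting the coordinates of `g` and `h` separately that
are jointly a permutation of `(g, h)`. -/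
def Joint {n : ℕ} {Z Z' : Type*} (g : Fin n → Z) (h : Fin n → Z')
    (σ τ : Equiv.Perm (Fin n)) : Prop :=
  ∃ π : Equiv.Perm (Fin n), g ∘ σ = g ∘ π ∧ h ∘ τ = h ∘ π

/-- Lower bound on the number of `τ` jointly typical with a given `σ`, through the products
`β α σ` with `α` fixing `g` and `β` fixing `h`. -/
lemma stab_mul_stab_le {n : ℕ} {Z Z' : Type*} (g : Fin n → Z) (h : Fin n → Z')
    (σ : Equiv.Perm (Fin n)) :
    (stab g : ℝ) * stab h ≤
      stab (fun i => (g i, h i)) * ∑ τ, if Joint g h σ τ then (1 : ℝ) else 0 := by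
  have hcard : (∑ τ, if Joint g h σ τ then (1 : ℝ) else 0) =
      ((Finset.univ.filter fun τ => Joint g h σ τ).card : ℝ) := by
    rw [← Finset.sum_filter, ← Finset.cast_card]
  rw [hcard, ← Nat.cast_mul, ← Nat.cast_mul, Nat.cast_le]
  rw [stab_eq_card g, stab_eq_card h, stab_eq_card (fun i => (g i, h i)), ← Finset.card_product]
  set S := (Finset.univ.filter fun π : Equiv.Perm (Fin n) => g ∘ π = g) ×ˢ
    (Finset.univ.filter fun π : Equiv.Perm (Fin n) => h ∘ π = h) with hS
  let Φ : Equiv.Perm (Fin n) × Equiv.Perm (Fin n) → Equiv.Perm (Fin n) := fun c => c.2 * c.1 * σ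
  have hmem : ∀ c, c ∈ S ↔ g ∘ c.1 = g ∧ h ∘ c.2 = h := by
    intro c; simp [hS, Finset.mem_product]
  have h1 : S.image Φ ⊆ Finset.univ.filter fun τ => Joint g h σ τ := by
    intro τ hτ
    obtain ⟨c, hc, rfl⟩ := Finset.mem_image.1 hτ
    rw [hmem] at hc
    rw [Finset.mem_filter]
    refine ⟨Finset.mem_univ _, c.1 * σ, ?_, ?_⟩
    · funext i
      exact (congrFun hc.1 (σ i)).symm
    · funext i
      exact congrFun hc.2 (c.1 (σ i))
  refine (Finset.card_le_mul_card_image S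
    (Finset.univ.filter fun π : Equiv.Perm (Fin n) =>
      (fun i => (g i, h i)) ∘ π = fun i => (g i, h i)).card ?_).trans
    (Nat.mul_le_mul_left _ (Finset.card_le_card h1))
  intro τ hτ
  obtain ⟨c0, hc0, rfl⟩ := Finset.mem_image.1 hτ
  rw [hmem] at hc0
  refine Finset.card_le_card_of_injOn (fun c => c.1 * c0.1⁻¹) ?_ ?_
  · intro c hc
    have hc' := Finset.mem_filter.1 (Finset.mem_coe.1 hc)
    obtain ⟨hc1, hc2⟩ := hc'
    rw [hmem] at hc1
    have e0 : c.2 * c.1 = c0.2 * c0.1 := mul_right_cancel hc2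
    have e1 : c.1 * c0.1⁻¹ = c.2⁻¹ * c0.2 := by
      rw [mul_inv_eq_iff_eq_mul, mul_assoc, ← e0, inv_mul_cancel_left]
    have inv_self : ∀ (p : Equiv.Perm (Fin n)) (i : Fin n), p (p⁻¹ i) = i :=
      fun p i => p.apply_symm_apply i
    have f1 : ∀ i, g ((c.1 * c0.1⁻¹) i) = g i := by
      intro i
      have a1 := congrFun hc1.1 (c0.1⁻¹ i)
      have a2 := congrFun hc0.1 (c0.1⁻¹ i)
      simp only [Function.comp_apply, inv_self] at a1 a2
      rw [Equiv.Perm.mul_apply, a1, ← a2]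
    have f2 : ∀ i, h ((c.1 * c0.1⁻¹) i) = h i := by
      intro i
      rw [e1]
      have a1 := congrFun hc1.2 (c.2⁻¹ (c0.2 i))
      have a2 := congrFun hc0.2 i
      simp only [Function.comp_apply, inv_self] at a1 a2
      rw [Equiv.Perm.mul_apply, ← a1]; exact a2
    refine Finset.mem_coe.2 (Finset.mem_filter.2 ⟨Finset.mem_univ _, ?_⟩)
    funext i
    exact Prod.ext (f1 i) (f2 i)
  · intro a ha b hb hab
    have ha2 := (Finset.mem_filter.1 (Finset.mem_coe.1 ha)).2
    have hb2 := (Finset.mem_filter.1 (Finset.mem_coe.1 hb)).2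
    have e1 : a.1 = b.1 := mul_right_cancel hab
    have e2 : a.2 * a.1 = b.2 * b.1 := mul_right_cancel (ha2.trans hb2.symm)
    rw [e1] at e2
    exact Prod.ext e1 (mul_right_cancel e2)

/-- Lower tail of a sum of log-likelihood ratios `log (a / b)` under a product distribution. -/
lemma decode_tail {ι Z : Type*} [Fintype ι] [DecidableEq ι] [Fintype Z] (w a b : ι → Z → ℝ)
    (hw0 : ∀ i z, 0 ≤ w i z) (hw1 : ∀ i, ∑ z, w i z = 1)
    (hab : ∀ i z, 0 < w i z → 0 < a i z ∧ 0 < b i z) (s μ v : ℝ) (hs : 0 < s)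
    (hμ : ∑ i, ∑ z, w i z * Real.log (a i z / b i z) = μ)
    (hv : ∑ i, ∑ z, w i z * Real.log (a i z / b i z) ^ 2 ≤ v) :
    ∑ y : ι → Z, (∏ i, w i (y i)) *
      (if Real.exp (μ - s) * ∏ i, b i (y i) < ∏ i, a i (y i) then 0 else 1) ≤ v / s ^ 2 := by
  refine le_trans ?_ ((chebyshev_prod w (fun i z => Real.log (a i z / b i z)) hw0 hw1 s hs).trans
    (div_le_div_of_nonneg_right hv (by positivity)))
  refine Finset.sum_le_sum fun y _ => ?_
  rcases (Finset.prod_nonneg fun i (_ : i ∈ Finset.univ) => hw0 i (y i)).eq_or_lt with h0 | hpos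
  · rw [← h0, zero_mul, zero_mul]
  refine mul_le_mul_of_nonneg_left ?_ hpos.le
  have hwp : ∀ i, 0 < w i (y i) := by
    intro i
    refine (hw0 i (y i)).lt_of_ne' fun h => ?_
    exact hpos.ne' (Finset.prod_eq_zero (Finset.mem_univ i) h)
  have ha : ∀ i, 0 < a i (y i) := fun i => (hab i _ (hwp i)).1
  have hb : ∀ i, 0 < b i (y i) := fun i => (hab i _ (hwp i)).2
  rw [hμ]
  by_cases hD : Real.exp (μ - s) * ∏ i, b i (y i) < ∏ i, a i (y i)
  · rw [if_pos hD]
    split_ifs <;> norm_num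
  · have hB : 0 < ∏ i, b i (y i) := Finset.prod_pos fun i _ => hb i
    have hA : 0 < ∏ i, a i (y i) := Finset.prod_pos fun i _ => ha i
    have h1 : ∑ i, Real.log (a i (y i) / b i (y i)) ≤ μ - s := by
      have := Real.log_le_log hA (not_lt.1 hD)
      rw [Real.log_mul (Real.exp_pos _).ne' hB.ne', Real.log_exp, Real.log_prod fun i _ => (ha i).ne',
        Real.log_prod fun i _ => (hb i).ne'] at this
      have h2 : ∑ i, Real.log (a i (y i) / b i (y i)) =
          ∑ i, Real.log (a i (y i)) - ∑ i, Real.log (b i (y i)) := by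
        rw [← Finset.sum_sub_distrib]
        exact Finset.sum_congr rfl fun i _ => Real.log_div (ha i).ne' (hb i).ne'
      linarith
    rw [if_neg hD, if_pos h1]

/-! ### Single-letter quantities -/

/-- The conditional output distribution `P_{Y|X₁}` induced by a joint input pmf; it is zero when
the conditioning letter has probability zero. -/
def condY (W : X1 → X2 → Y → ℝ) (P : X1 × X2 → ℝ) (x1 : X1) (y : Y) : ℝ :=
  ∑ x2, P (x1, x2) / margA P x1 * W x1 x2 y

/-- `I(X₁;Y)` in nats. -/
def natI1 (W : X1 → X2 → Y → ℝ) (P : X1 × X2 → ℝ) : ℝ :=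
  ∑ z, P z * ∑ y, W z.1 z.2 y * Real.log (condY W P z.1 y / outDistJ W P y)

/-- `I(X₂;Y|X₁)` in nats. -/
def natI2 (W : X1 → X2 → Y → ℝ) (P : X1 × X2 → ℝ) : ℝ :=
  ∑ z, P z * ∑ y, W z.1 z.2 y * Real.log (W z.1 z.2 y / condY W P z.1 y)

section SingleLetter

variable {W : X1 → X2 → Y → ℝ} {P : X1 × X2 → ℝ}

lemma sum_prodType (F : X1 × X2 → ℝ) : ∑ z, F z = ∑ x1, ∑ x2, F (x1, x2) :=
  Fintype.sum_prod_type F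

lemma margA_nonneg (hP : IsPMF P) (x1 : X1) : 0 ≤ margA P x1 :=
  Finset.sum_nonneg fun _ _ => hP.1 _

lemma margB_nonneg (hP : IsPMF P) (x2 : X2) : 0 ≤ margB P x2 :=
  Finset.sum_nonneg fun _ _ => hP.1 _

lemma le_margA (hP : IsPMF P) (x1 : X1) (x2 : X2) : P (x1, x2) ≤ margA P x1 :=
  Finset.single_le_sum (f := fun x2 => P (x1, x2)) (fun _ _ => hP.1 _) (Finset.mem_univ x2)

lemma le_margB (hP : IsPMF P) (x1 : X1) (x2 : X2) : P (x1, x2) ≤ margB P x2 :=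
  Finset.single_le_sum (f := fun x1 => P (x1, x2)) (fun _ _ => hP.1 _) (Finset.mem_univ x1)

lemma margA_isPMF (hP : IsPMF P) : IsPMF (margA P) :=
  ⟨margA_nonneg hP, by rw [← hP.2, sum_prodType]; rfl⟩

lemma margB_isPMF (hP : IsPMF P) : IsPMF (margB P) :=
  ⟨margB_nonneg hP, by rw [← hP.2, sum_prodType, Finset.sum_comm]; rfl⟩

lemma isPMF_le_one {α : Type*} [Fintype α] {p : α → ℝ} (hp : IsPMF p) (a : α) : p a ≤ 1 := by
  rw [← hp.2]
  exact Finset.single_le_sum (fun a _ => hp.1 a) (Finset.mem_univ a)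

lemma channel_isPMF (hW : IsChannel W) (x1 : X1) (x2 : X2) : IsPMF (W x1 x2) :=
  ⟨hW.1 x1 x2, hW.2 x1 x2⟩

lemma condY_nonneg (hW : IsChannel W) (hP : IsPMF P) (x1 : X1) (y : Y) : 0 ≤ condY W P x1 y :=
  Finset.sum_nonneg fun _ _ => mul_nonneg (div_nonneg (hP.1 _) (margA_nonneg hP _)) (hW.1 _ _ _)

lemma margA_mul_condY (hP : IsPMF P) (x1 : X1) (y : Y) :
    margA P x1 * condY W P x1 y = ∑ x2, P (x1, x2) * W x1 x2 y := by
  unfold condY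
  rw [Finset.mul_sum]
  refine Finset.sum_congr rfl fun x2 _ => ?_
  rcases (margA_nonneg hP x1).eq_or_lt with h | h
  · have : P (x1, x2) = 0 := le_antisymm ((le_margA hP x1 x2).trans h.ge) (hP.1 _)
    simp [this]
  · field_simp

lemma sum_margA_condY (hP : IsPMF P) (y : Y) :
    ∑ x1, margA P x1 * condY W P x1 y = outDistJ W P y :=
  Finset.sum_congr rfl fun x1 _ => margA_mul_condY hP x1 y

lemma outDistJ_isPMF (hW : IsChannel W) (hP : IsPMF P) : IsPMF (outDistJ W P) := by
  refine ⟨fun y => Finset.sum_nonneg fun _ _ => Finset.sum_nonneg fun _ _ =>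
    mul_nonneg (hP.1 _) (hW.1 _ _ _), ?_⟩
  rw [← hP.2, sum_prodType]
  unfold outDistJ
  rw [Finset.sum_comm]
  refine Finset.sum_congr rfl fun x1 _ => ?_
  rw [Finset.sum_comm]
  refine Finset.sum_congr rfl fun x2 _ => ?_
  rw [← Finset.mul_sum, hW.2, mul_one]

lemma condY_le_one (hW : IsChannel W) (hP : IsPMF P) (x1 : X1) (y : Y) : condY W P x1 y ≤ 1 := by
  calc condY W P x1 y ≤ ∑ x2, P (x1, x2) / margA P x1 := by
        refine Finset.sum_le_sum fun x2 _ => ?_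
        exact mul_le_of_le_one_right (div_nonneg (hP.1 _) (margA_nonneg hP _))
          (isPMF_le_one (channel_isPMF hW x1 x2) y)
    _ = margA P x1 / margA P x1 := by rw [← Finset.sum_div]; rfl
    _ ≤ 1 := div_self_le_one _

lemma condY_pos (hW : IsChannel W) (hP : IsPMF P) {z : X1 × X2} {y : Y} (hz : 0 < P z)
    (hy : 0 < W z.1 z.2 y) : 0 < condY W P z.1 y := by
  obtain ⟨x1, x2⟩ := z
  have h1 := hz.trans_le (le_margA hP x1 x2)
  refine lt_of_lt_of_le (mul_pos (div_pos hz h1) hy)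
    (Finset.single_le_sum (f := fun x2 => P (x1, x2) / margA P x1 * W x1 x2 y) (fun x2 _ => ?_)
      (Finset.mem_univ x2))
  exact mul_nonneg (div_nonneg (hP.1 _) (margA_nonneg hP _)) (hW.1 _ _ _)

lemma outDistJ_pos (hW : IsChannel W) (hP : IsPMF P) {z : X1 × X2} {y : Y} (hz : 0 < P z)
    (hy : 0 < W z.1 z.2 y) : 0 < outDistJ W P y := by
  rw [← sum_margA_condY hP]
  refine lt_of_lt_of_le (mul_pos (hz.trans_le (le_margA hP z.1 z.2)) (condY_pos hW hP hz hy))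
    (Finset.single_le_sum (f := fun x1 => margA P x1 * condY W P x1 y) (fun x1 _ => ?_)
      (Finset.mem_univ z.1))
  exact mul_nonneg (margA_nonneg hP _) (condY_nonneg hW hP _ _)

/-- Chain rule `I(X₁,X₂;Y) = I(X₁;Y) + I(X₂;Y|X₁)`. -/
lemma natI_add (hW : IsChannel W) (hP : IsPMF P) :
    natI1 W P + natI2 W P = Real.log 2 * IsumJ W P := by
  unfold natI1 natI2 IsumJ
  rw [← Finset.sum_add_distrib, sum_prodType, Finset.mul_sum]
  refine Finset.sum_congr rfl fun x1 _ => ?_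
  rw [Finset.mul_sum]
  refine Finset.sum_congr rfl fun x2 _ => ?_
  rw [← mul_add, ← Finset.sum_add_distrib, Finset.mul_sum, Finset.mul_sum]
  refine Finset.sum_congr rfl fun y _ => ?_
  have h2 : Real.log 2 ≠ 0 := (Real.log_pos (by norm_num)).ne'
  rcases (hP.1 (x1, x2)).eq_or_lt with h | hz
  · simp [← h]
  rcases (hW.1 x1 x2 y).eq_or_lt with h | hy
  · simp [← h]
  have hc := condY_pos hW hP hz hy
  have ho := outDistJ_pos hW hP hz hy
  dsimp only at hc
  rw [Real.logb, Real.log_div hc.ne' ho.ne', Real.log_div hy.ne' hc.ne',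
    Real.log_div hy.ne' ho.ne']
  field_simp
  ring

lemma mul_log_sq_le {t : ℝ} (h0 : 0 ≤ t) (h1 : t ≤ 1) : t * Real.log t ^ 2 ≤ 4 := by
  rcases h0.eq_or_lt with rfl | h0
  · simp
  have := Real.abs_log_mul_self_rpow_lt t (1 / 2) h0 h1 (by norm_num)
  rw [← Real.sqrt_eq_rpow] at this
  have h2 : (Real.log t * Real.sqrt t) ^ 2 ≤ 2 ^ 2 := by
    rw [← sq_abs]
    refine pow_le_pow_left₀ (abs_nonneg _) ?_ 2
    norm_num at this ⊢
    exact this.le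
  rw [mul_pow, Real.sq_sqrt h0.le] at h2
  linarith

lemma sum_mul_log_sq_le {p : Y → ℝ} (h0 : ∀ y, 0 ≤ p y) (h1 : ∀ y, p y ≤ 1) :
    ∑ y, p y * Real.log (p y) ^ 2 ≤ 4 * Fintype.card Y := by
  refine (Finset.sum_le_sum fun y _ => mul_log_sq_le (h0 y) (h1 y)).trans (le_of_eq ?_)
  simp
  ring

lemma log_div_sq_le (a b : ℝ) :
    Real.log (a / b) ^ 2 ≤ 2 * Real.log a ^ 2 + 2 * Real.log b ^ 2 := by
  rcases eq_or_ne a 0 with rfl | ha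
  · simp; positivity
  rcases eq_or_ne b 0 with rfl | hb
  · simp; positivity
  rw [Real.log_div ha hb]
  nlinarith [sq_nonneg (Real.log a + Real.log b)]

/-- Together with `moment_cond` and `moment_out`, this bounds the second moments of the information
densities uniformly in the input pmf, because `t (log t)²` is bounded on `[0,1]`. -/
lemma moment_W (hW : IsChannel W) (hP : IsPMF P) :
    ∑ z, P z * ∑ y, W z.1 z.2 y * Real.log (W z.1 z.2 y) ^ 2 ≤ 4 * Fintype.card Y := by
  calc _ ≤ ∑ z, P z * (4 * Fintype.card Y) := by
        refine Finset.sum_le_sum fun z _ => mul_le_mul_of_nonneg_left ?_ (hP.1 z)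
        exact sum_mul_log_sq_le (hW.1 _ _) (isPMF_le_one (channel_isPMF hW _ _))
    _ = _ := by rw [← Finset.sum_mul, hP.2, one_mul]

lemma moment_cond (hW : IsChannel W) (hP : IsPMF P) :
    ∑ z, P z * ∑ y, W z.1 z.2 y * Real.log (condY W P z.1 y) ^ 2 ≤ 4 * Fintype.card Y := by
  calc _ = ∑ x1, margA P x1 * ∑ y, condY W P x1 y * Real.log (condY W P x1 y) ^ 2 := by
        rw [sum_prodType]
        refine Finset.sum_congr rfl fun x1 _ => ?_
        simp only [Finset.mul_sum]
        rw [Finset.sum_comm]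
        refine Finset.sum_congr rfl fun y _ => ?_
        rw [← mul_assoc, margA_mul_condY hP, Finset.sum_mul]
        exact Finset.sum_congr rfl fun x2 _ => by ring
    _ ≤ ∑ x1, margA P x1 * (4 * Fintype.card Y) := by
        refine Finset.sum_le_sum fun x1 _ => mul_le_mul_of_nonneg_left ?_ (margA_nonneg hP x1)
        exact sum_mul_log_sq_le (condY_nonneg hW hP x1) (condY_le_one hW hP x1)
    _ = _ := by rw [← Finset.sum_mul, (margA_isPMF hP).2, one_mul]

lemma moment_out (hW : IsChannel W) (hP : IsPMF P) :
    ∑ z, P z * ∑ y, W z.1 z.2 y * Real.log (outDistJ W P y) ^ 2 ≤ 4 * Fintype.card Y := by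
  have hQ := outDistJ_isPMF hW hP
  refine le_trans (le_of_eq ?_) (sum_mul_log_sq_le hQ.1 (isPMF_le_one hQ))
  rw [sum_prodType]
  simp only [Finset.mul_sum]
  calc _ = ∑ y, ∑ x1, ∑ x2, P (x1, x2) * (W x1 x2 y * Real.log (outDistJ W P y) ^ 2) := by
        symm
        rw [Finset.sum_comm]
        refine Finset.sum_congr rfl fun x1 _ => ?_
        rw [Finset.sum_comm]
    _ = _ := by
        refine Finset.sum_congr rfl fun y _ => ?_
        generalize Real.log (outDistJ W P y) ^ 2 = L
        unfold outDistJ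
        rw [Finset.sum_mul]
        refine Finset.sum_congr rfl fun x1 _ => ?_
        rw [Finset.sum_mul]
        exact Finset.sum_congr rfl fun x2 _ => by ring

lemma moment_div (hW : IsChannel W) (hP : IsPMF P) (a b : X1 × X2 → Y → ℝ) (c : ℝ)
    (ha : ∑ z, P z * ∑ y, W z.1 z.2 y * Real.log (a z y) ^ 2 ≤ c)
    (hb : ∑ z, P z * ∑ y, W z.1 z.2 y * Real.log (b z y) ^ 2 ≤ c) :
    ∑ z, P z * ∑ y, W z.1 z.2 y * Real.log (a z y / b z y) ^ 2 ≤ 4 * c := by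
  calc _ ≤ ∑ z, P z * ∑ y, W z.1 z.2 y *
        (2 * Real.log (a z y) ^ 2 + 2 * Real.log (b z y) ^ 2) := by
        refine Finset.sum_le_sum fun z _ => mul_le_mul_of_nonneg_left ?_ (hP.1 z)
        exact Finset.sum_le_sum fun y _ => mul_le_mul_of_nonneg_left (log_div_sq_le _ _) (hW.1 _ _ _)
    _ = 2 * (∑ z, P z * ∑ y, W z.1 z.2 y * Real.log (a z y) ^ 2) +
        2 * ∑ z, P z * ∑ y, W z.1 z.2 y * Real.log (b z y) ^ 2 := by
        simp only [Finset.mul_sum]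
        rw [← Finset.sum_add_distrib]
        refine Finset.sum_congr rfl fun z _ => ?_
        rw [← Finset.sum_add_distrib]
        exact Finset.sum_congr rfl fun y _ => by ring
    _ ≤ _ := by linarith

end SingleLetter

/-! ### Codes of constant composition -/

lemma sum_comp_emp {n : ℕ} (hn : 0 < n) {Z : Type*} [Fintype Z] (z : Fin n → Z) (F : Z → ℝ) :
    ∑ i, F (z i) = n * ∑ x, emp z x * F x := by
  have hn' : (n : ℝ) ≠ 0 := by positivity
  rw [sum_comp_eq, Finset.mul_sum]
  refine Finset.sum_congr rfl fun x _ => ?_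
  unfold emp
  field_simp

lemma margA_emp {n : ℕ} (z : Fin n → X1 × X2) (x1 : X1) :
    margA (emp z) x1 = emp (fun i => (z i).1) x1 := by
  unfold margA emp
  simp only [cnt_eq_sum]
  rw [← Finset.sum_div, Finset.sum_comm]
  congr 1
  refine Finset.sum_congr rfl fun i _ => ?_
  by_cases h : (z i).1 = x1
  · simp [Prod.ext_iff, h]
  · simp [Prod.ext_iff, h]

lemma margB_emp {n : ℕ} (z : Fin n → X1 × X2) (x2 : X2) :
    margB (emp z) x2 = emp (fun i => (z i).2) x2 := by
  unfold margB emp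
  simp only [cnt_eq_sum]
  rw [← Finset.sum_div, Finset.sum_comm]
  congr 1
  refine Finset.sum_congr rfl fun i _ => ?_
  by_cases h : (z i).2 = x2
  · simp [Prod.ext_iff, h]
  · simp [Prod.ext_iff, h]

/-- The likelihood ratio of a sequence between its joint type and the product of the marginal
types is `exp (n I(X₁;X₂))`. -/
lemma selfProb_eq {n : ℕ} (hn : 0 < n) (z : Fin n → X1 × X2) :
    selfProb z = Real.exp (n * (Real.log 2 * MIJ (emp z))) *
      (selfProb (fun i => (z i).1) * selfProb (fun i => (z i).2)) := by
  have h1 : (n : ℝ) * (Real.log 2 * MIJ (emp z)) =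
      ∑ i, Real.log (emp z (z i) / (margA (emp z) (z i).1 * margB (emp z) (z i).2)) := by
    rw [sum_comp_emp hn z (fun x => Real.log (emp z x / (margA (emp z) x.1 * margB (emp z) x.2)))]
    congr 1
    unfold MIJ
    rw [sum_prodType, Finset.mul_sum]
    refine Finset.sum_congr rfl fun x1 _ => ?_
    rw [Finset.mul_sum]
    refine Finset.sum_congr rfl fun x2 _ => ?_
    have : Real.log 2 ≠ 0 := (Real.log_pos one_lt_two).ne'
    simp only [Real.logb]
    field_simp
  rw [h1, Real.exp_sum]
  unfold selfProb
  rw [← Finset.prod_mul_distrib, ← Finset.prod_mul_distrib]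
  refine Finset.prod_congr rfl fun i _ => ?_
  have ha := emp_pos (fun i => (z i).1) i
  have hb := emp_pos (fun i => (z i).2) i
  have hz := emp_pos z i
  rw [margA_emp, margB_emp, Real.exp_log (by positivity)]
  field_simp

/-- A uniformly permuted first codeword passes the first threshold test against a fixed output
with probability at most `(e n) ^ |𝒳₁| / t`. -/
lemma confusion_one {W : X1 → X2 → Y → ℝ} (hW : IsChannel W) {n : ℕ} (hn : 0 < n)
    (z : Fin n → X1 × X2) (y : Fin n → Y) (t : ℝ) (ht : 0 < t) :
    (∑ σ : Equiv.Perm (Fin n), if t * ∏ i, outDistJ W (emp z) (y i) <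
      ∏ i, condY W (emp z) (z (σ i)).1 (y i) then (1 : ℝ) else 0) ≤
      (Real.exp 1 * n) ^ Fintype.card X1 / t * n.factorial := by
  have hP := emp_isPMF hn z
  let g : Fin n → X1 := fun i => (z i).1
  let F : (Fin n → X1) → ℝ := fun f => (∏ i, margA (emp z) (f i)) *
    (if t * ∏ i, outDistJ W (emp z) (y i) < ∏ i, condY W (emp z) (f i) (y i) then 1 else 0)
  have hF : ∀ f, 0 ≤ F f := fun f => mul_nonneg
    (Finset.prod_nonneg fun i _ => margA_nonneg hP _) (by split_ifs <;> norm_num)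
  have h1 := sum_perm_le g F hF
  have h2 : ∑ f, F f ≤ 1 / t :=
    markov_prod (fun _ => margA (emp z)) (fun i x => condY W (emp z) x (y i))
      (fun _ => margA_nonneg hP) (fun _ _ => condY_nonneg hW hP _ _)
      (fun i => outDistJ W (emp z) (y i)) (fun i => (sum_margA_condY hP (y i)).symm) t ht
  have h3 : ∀ σ : Equiv.Perm (Fin n), F (g ∘ σ) = selfProb g *
      if t * ∏ i, outDistJ W (emp z) (y i) <
        ∏ i, condY W (emp z) (z (σ i)).1 (y i) then (1 : ℝ) else 0 := by
    intro σ
    have : ∏ i, margA (emp z) ((g ∘ σ) i) = selfProb g := by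
      simp only [margA_emp, Function.comp]
      exact Equiv.prod_comp σ fun i => emp g (g i)
    simp only [F, this]
    rfl
  simp only [h3, ← Finset.mul_sum] at h1
  set S := ∑ σ : Equiv.Perm (Fin n), if t * ∏ i, outDistJ W (emp z) (y i) <
      ∏ i, condY W (emp z) (z (σ i)).1 (y i) then (1 : ℝ) else 0
  have h4 := stab_le hn g
  have h5 := pow_self_le_factorial_mul_exp n
  have hp := selfProb_pos g
  set E := (Real.exp 1 * n) ^ Fintype.card X1
  have hE : 0 ≤ E := by positivity
  have h6 : (stab g : ℝ) ≤ E * selfProb g * n.factorial := by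
    refine le_of_mul_le_mul_right ?_ (Real.exp_pos n)
    calc _ ≤ E * (selfProb g * (n : ℝ) ^ n) := h4
      _ ≤ E * (selfProb g * (n.factorial * Real.exp n)) := by gcongr
      _ = _ := by ring
  refine le_of_mul_le_mul_left ?_ hp
  calc _ ≤ stab g * ∑ f, F f := h1
    _ ≤ E * selfProb g * n.factorial * (1 / t) :=
      mul_le_mul h6 h2 (Finset.sum_nonneg fun f _ => hF f) (by positivity)
    _ = _ := by ring

/-- Among the second codewords jointly typical with a given first codeword, the fraction that
passes the second threshold test against a fixed output is at most
`(e n) ^ |𝒳₁ × 𝒳₂| / t`. -/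
lemma confusion_two {W : X1 → X2 → Y → ℝ} (hW : IsChannel W) {n : ℕ} (hn : 0 < n)
    (z : Fin n → X1 × X2) (σ : Equiv.Perm (Fin n)) (y : Fin n → Y) (t : ℝ) (ht : 0 < t) :
    (∑ τ : Equiv.Perm (Fin n), if Joint (fun i => (z i).1) (fun i => (z i).2) σ τ ∧
      t * ∏ i, condY W (emp z) (z (σ i)).1 (y i) <
      ∏ i, W (z (σ i)).1 (z (τ i)).2 (y i) then (1 : ℝ) else 0) ≤
      (Real.exp 1 * n) ^ Fintype.card (X1 × X2) / t *
        ∑ τ, if Joint (fun i => (z i).1) (fun i => (z i).2) σ τ then (1 : ℝ) else 0 := by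
  have hP := emp_isPMF hn z
  have hn' : (0 : ℝ) < n := by positivity
  let g : Fin n → X1 := fun i => (z i).1
  let h : Fin n → X2 := fun i => (z i).2
  let F : (Fin n → X2) → ℝ := fun f =>
    (∏ i, emp z (g (σ i), f i) / margA (emp z) (g (σ i))) *
    (if t * ∏ i, condY W (emp z) (g (σ i)) (y i) < ∏ i, W (g (σ i)) (f i) (y i) then 1 else 0)
  have hF : ∀ f, 0 ≤ F f := fun f => mul_nonneg
    (Finset.prod_nonneg fun i _ => div_nonneg (hP.1 _) (margA_nonneg hP _))
    (by split_ifs <;> norm_num)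
  have h1 := sum_perm_le h F hF
  have h2 : ∑ f, F f ≤ 1 / t :=
    markov_prod (fun i x => emp z (g (σ i), x) / margA (emp z) (g (σ i)))
      (fun i x => W (g (σ i)) x (y i))
      (fun _ _ => div_nonneg (hP.1 _) (margA_nonneg hP _)) (fun _ _ => hW.1 _ _ _)
      (fun i => condY W (emp z) (g (σ i)) (y i)) (fun i => rfl) t ht
  have h3 : ∀ τ : Equiv.Perm (Fin n), (selfProb z / selfProb g) *
      (if Joint g h σ τ ∧ t * ∏ i, condY W (emp z) (z (σ i)).1 (y i) <
        ∏ i, W (z (σ i)).1 (z (τ i)).2 (y i) then (1 : ℝ) else 0) ≤ F (h ∘ τ) := by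
    intro τ
    by_cases hT : Joint g h σ τ
    · obtain ⟨π, hg, hh⟩ := hT
      have hT : Joint g h σ τ := ⟨π, hg, hh⟩
      have e1 : ∏ i, margA (emp z) (g (σ i)) = selfProb g := by
        simp only [margA_emp]
        exact Equiv.prod_comp σ fun i => emp g (g i)
      have e2 : ∏ i, emp z (g (σ i), (h ∘ τ) i) = selfProb z := by
        have : ∀ i, (g (σ i), (h ∘ τ) i) = z (π i) := fun i =>
          Prod.ext (congrFun hg i) (congrFun hh i)
        simp only [this]
        exact Equiv.prod_comp π fun i => emp z (z i)
      simp only [F, Finset.prod_div_distrib, e1, e2, hT, true_and]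
      exact le_rfl
    · simp only [hT, false_and, if_false, mul_zero]
      exact hF _
  have h3' := (Finset.sum_le_sum fun τ (_ : τ ∈ Finset.univ) => h3 τ).trans h1
  rw [← Finset.mul_sum] at h3'
  have h7 := stab_mul_stab_le g h σ
  change (∑ τ : Equiv.Perm (Fin n), if Joint g h σ τ ∧ _ then (1 : ℝ) else 0) ≤
    _ / t * ∑ τ, if Joint g h σ τ then (1 : ℝ) else 0
  set S := ∑ τ : Equiv.Perm (Fin n), if Joint g h σ τ ∧
      t * ∏ i, condY W (emp z) (z (σ i)).1 (y i) <
      ∏ i, W (z (σ i)).1 (z (τ i)).2 (y i) then (1 : ℝ) else 0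
  set J := ∑ τ, if Joint g h σ τ then (1 : ℝ) else 0
  change (stab g : ℝ) * stab h ≤ stab z * J at h7
  have hJ : 0 ≤ J := Finset.sum_nonneg fun τ _ => by split_ifs <;> norm_num
  have h4 := stab_le hn z
  have h5 := selfProb_le hn g
  have hpg := selfProb_pos g
  have hpz := selfProb_pos z
  set E := (Real.exp 1 * n) ^ Fintype.card (X1 × X2)
  have hE : 0 ≤ E := by positivity
  have h8 : (selfProb z / selfProb g) * S ≤ stab h * (1 / t) :=
    h3'.trans (mul_le_mul_of_nonneg_left h2 (Nat.cast_nonneg _))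
  have h9 : selfProb g * stab h ≤ E * selfProb z * J := by
    have hc : (0 : ℝ) < (n : ℝ) ^ n := by positivity
    refine le_of_mul_le_mul_right ?_ hc
    calc selfProb g * stab h * (n : ℝ) ^ n = (selfProb g * (n : ℝ) ^ n) * stab h := by ring
      _ ≤ stab g * Real.exp n * stab h := by gcongr
      _ = Real.exp n * (stab g * stab h) := by ring
      _ ≤ Real.exp n * (stab z * J) := by gcongr
      _ = (stab z * Real.exp n) * J := by ring
      _ ≤ (E * (selfProb z * (n : ℝ) ^ n)) * J := by gcongr
      _ = _ := by ring
  have h10 : selfProb z * S ≤ selfProb g * (stab h * (1 / t)) := by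
    have := mul_le_mul_of_nonneg_left h8 hpg.le
    calc _ = selfProb g * (selfProb z / selfProb g * S) := by field_simp
      _ ≤ _ := this
  refine le_of_mul_le_mul_left ?_ hpz
  calc selfProb z * S ≤ selfProb g * stab h * (1 / t) := by linarith
    _ ≤ E * selfProb z * J * (1 / t) := by gcongr
    _ = _ := by ring

/-- A uniformly permuted second codeword is jointly typical with a given first codeword with
probability at least `exp (-n I(X₁;X₂))`, up to a polynomial factor. -/
lemma joint_prob {n : ℕ} (hn : 0 < n) (z : Fin n → X1 × X2) (σ : Equiv.Perm (Fin n)) :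
    Real.exp (-(n * (Real.log 2 * MIJ (emp z)))) /
      (Real.exp 1 * n) ^ (Fintype.card (X1 × X2) + 1) * n.factorial ≤
      ∑ τ, if Joint (fun i => (z i).1) (fun i => (z i).2) σ τ then (1 : ℝ) else 0 := by
  let g : Fin n → X1 := fun i => (z i).1
  let h : Fin n → X2 := fun i => (z i).2
  have hn' : (0 : ℝ) < n := by positivity
  have h1 := stab_mul_stab_le g h σ
  change _ ≤ ∑ τ, if Joint g h σ τ then (1 : ℝ) else 0
  set J := ∑ τ, if Joint g h σ τ then (1 : ℝ) else 0
  change (stab g : ℝ) * stab h ≤ stab z * J at h1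
  have hJ : 0 ≤ J := Finset.sum_nonneg fun τ _ => by split_ifs <;> norm_num
  have h2 := stab_le hn z
  have h3 := selfProb_le hn g
  have h4 := selfProb_le hn h
  have h5 := factorial_mul_exp_le n n le_rfl hn
  have h6 : selfProb z = _ * (selfProb g * selfProb h) := selfProb_eq hn z
  have hpg := selfProb_pos g
  have hph := selfProb_pos h
  set A := (n : ℝ) * (Real.log 2 * MIJ (emp z))
  rw [h6] at h2
  rw [pow_succ]
  set E := (Real.exp 1 * n) ^ Fintype.card (X1 × X2)
  have hE : 0 < E := by positivity
  have hc : (0 : ℝ) < (n : ℝ) ^ n := by positivity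
  have h7 : Real.exp (-A) * (n : ℝ) ^ n ≤ E * J * Real.exp n := by
    have hpos : 0 < selfProb g * selfProb h * (n : ℝ) ^ n * Real.exp A := by positivity
    refine le_of_mul_le_mul_left ?_ hpos
    calc _ = (selfProb g * (n : ℝ) ^ n) * (selfProb h * (n : ℝ) ^ n) := by
            rw [Real.exp_neg]; field_simp
      _ ≤ (stab g * Real.exp n) * (stab h * Real.exp n) := by gcongr
      _ = (stab g * stab h) * (Real.exp n * Real.exp n) := by ring
      _ ≤ (stab z * J) * (Real.exp n * Real.exp n) := by gcongr
      _ = (stab z * Real.exp n) * (J * Real.exp n) := by ring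
      _ ≤ (E * (Real.exp A * (selfProb g * selfProb h) * (n : ℝ) ^ n)) * (J * Real.exp n) := by
        gcongr
      _ = _ := by ring
  rw [div_mul_eq_mul_div, div_le_iff₀ (by positivity)]
  refine le_of_mul_le_mul_right ?_ (Real.exp_pos n)
  calc _ = Real.exp (-A) * (n.factorial * Real.exp n) := by ring
    _ ≤ Real.exp (-A) * (Real.exp 1 * n * (n : ℝ) ^ n) := by gcongr
    _ = (Real.exp 1 * n) * (Real.exp (-A) * (n : ℝ) ^ n) := by ring
    _ ≤ (Real.exp 1 * n) * (E * J * Real.exp n) := by gcongr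
    _ = _ := by ring

/-- Achievability for a fixed joint type. -/
theorem type_code {W : X1 → X2 → Y → ℝ} (hW : IsChannel W) {n : ℕ} (hn : 0 < n)
    (z : Fin n → X1 × X2) (s : ℝ) (hs : 0 < s) (M1 M2 K : ℕ) (hM1 : 0 < M1) (hM2 : 0 < M2)
    (hK : 0 < K) :
    ExistsCode W n M1 M2 K
      (n * (16 * Fintype.card Y) / s ^ 2 + n * (16 * Fintype.card Y) / s ^ 2 +
        (M1 - 1) * ((Real.exp 1 * n) ^ Fintype.card X1 / Real.exp (n * natI1 W (emp z) - s)) +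
        (M2 - 1) * ((Real.exp 1 * n) ^ Fintype.card (X1 × X2) /
          Real.exp (n * natI2 W (emp z) - s)) +
        Real.exp (-(K * (Real.exp (-(n * (Real.log 2 * MIJ (emp z)))) /
          (Real.exp 1 * n) ^ (Fintype.card (X1 × X2) + 1))))) := by
  have hP := emp_isPMF hn z
  let P := emp z
  let g : Fin n → X1 := fun i => (z i).1
  let h : Fin n → X2 := fun i => (z i).2
  have hsum : ∀ (π : Equiv.Perm (Fin n)) (F : X1 × X2 → ℝ),
      ∑ i, F (z (π i)) = n * ∑ x, P x * F x := fun π F => by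
    rw [Equiv.sum_comp π fun i => F (z i), sum_comp_emp hn]
  have hcard : (Fintype.card (Equiv.Perm (Fin n)) : ℝ) = n.factorial := by
    rw [Fintype.card_perm, Fintype.card_fin]
  obtain ⟨x, u, e, d, hd⟩ := oneShot (A := Equiv.Perm (Fin n)) (B := Equiv.Perm (Fin n))
    (Z := Fin n → Y) (fun σ τ y => ∏ i, W (z (σ i)).1 (z (τ i)).2 (y i))
    (fun σ τ y => Finset.prod_nonneg fun i _ => hW.1 _ _ _)
    (fun σ τ => by
      rw [sum_pi_prod (fun i y => W (z (σ i)).1 (z (τ i)).2 y)]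
      exact Finset.prod_eq_one fun i _ => hW.2 _ _)
    (Joint g h)
    (fun σ y => Real.exp (n * natI1 W P - s) * ∏ i, outDistJ W P (y i) <
      ∏ i, condY W P (z (σ i)).1 (y i))
    (fun σ τ y => Real.exp (n * natI2 W P - s) * ∏ i, condY W P (z (σ i)).1 (y i) <
      ∏ i, W (z (σ i)).1 (z (τ i)).2 (y i))
    (n * (16 * Fintype.card Y) / s ^ 2) (n * (16 * Fintype.card Y) / s ^ 2)
    ((Real.exp 1 * n) ^ Fintype.card X1 / Real.exp (n * natI1 W P - s))
    ((Real.exp 1 * n) ^ Fintype.card (X1 × X2) / Real.exp (n * natI2 W P - s))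
    (Real.exp (-(n * (Real.log 2 * MIJ P))) / (Real.exp 1 * n) ^ (Fintype.card (X1 × X2) + 1))
    (by positivity) (by positivity) (by positivity)
    (by
      rintro σ τ ⟨π, hg, hh⟩
      have hg' : ∀ i, (z (σ i)).1 = (z (π i)).1 := congrFun hg
      have hh' : ∀ i, (z (τ i)).2 = (z (π i)).2 := congrFun hh
      simp only [hg', hh']
      refine decode_tail (fun i y => W (z (π i)).1 (z (π i)).2 y)
        (fun i y => condY W P (z (π i)).1 y) (fun i y => outDistJ W P y)
        (fun i y => hW.1 _ _ _) (fun i => hW.2 _ _)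
        (fun i y hy => ⟨condY_pos hW hP (emp_pos z (π i)) hy,
          outDistJ_pos hW hP (emp_pos z (π i)) hy⟩) s _ _ hs ?_ ?_
      · exact hsum π fun x => ∑ y, W x.1 x.2 y * Real.log (condY W P x.1 y / outDistJ W P y)
      · rw [hsum π fun x => ∑ y, W x.1 x.2 y * Real.log (condY W P x.1 y / outDistJ W P y) ^ 2]
        have := moment_div hW hP (fun x y => condY W P x.1 y) (fun x y => outDistJ W P y) _
          (moment_cond hW hP) (moment_out hW hP)
        exact mul_le_mul_of_nonneg_left (this.trans (by linarith)) (Nat.cast_nonneg _))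
    (by
      rintro σ τ ⟨π, hg, hh⟩
      have hg' : ∀ i, (z (σ i)).1 = (z (π i)).1 := congrFun hg
      have hh' : ∀ i, (z (τ i)).2 = (z (π i)).2 := congrFun hh
      simp only [hg', hh']
      refine decode_tail (fun i y => W (z (π i)).1 (z (π i)).2 y)
        (fun i y => W (z (π i)).1 (z (π i)).2 y) (fun i y => condY W P (z (π i)).1 y)
        (fun i y => hW.1 _ _ _) (fun i => hW.2 _ _)
        (fun i y hy => ⟨hy, condY_pos hW hP (emp_pos z (π i)) hy⟩) s _ _ hs ?_ ?_
      · exact hsum π fun x => ∑ y, W x.1 x.2 y * Real.log (W x.1 x.2 y / condY W P x.1 y)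
      · rw [hsum π fun x => ∑ y, W x.1 x.2 y * Real.log (W x.1 x.2 y / condY W P x.1 y) ^ 2]
        have := moment_div hW hP (fun x y => W x.1 x.2 y) (fun x y => condY W P x.1 y) _
          (moment_W hW hP) (moment_cond hW hP)
        exact mul_le_mul_of_nonneg_left (this.trans (by linarith)) (Nat.cast_nonneg _))
    (by
      intro y
      rw [hcard]
      exact confusion_one hW hn z y _ (Real.exp_pos _))
    (by
      intro σ y
      exact confusion_two hW hn z σ y _ (Real.exp_pos _))
    (by
      intro σ
      rw [hcard]
      exact joint_prob hn z σ)
    M1 M2 K hM1 hM2 hK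
  exact ⟨e, fun m1 _ i => (z (x m1 i)).1, fun m2 k i => (z (u m2 k i)).2, d, hd⟩

/-! ### Rounding a distribution to a type -/

lemma exists_type {Z : Type*} [Fintype Z] {q : Z → ℝ} (hq : IsPMF q) {n : ℕ} (hn : 0 < n) :
    ∃ z : Fin n → Z, ∀ x, |emp z x - q x| ≤ (Fintype.card Z : ℝ) / n := by
  have hn' : (0 : ℝ) < n := by positivity
  have hne : Nonempty Z := by
    by_contra h
    rw [not_nonempty_iff] at h
    have := hq.2
    simp at this
  obtain ⟨x0⟩ := hne
  have hcard : (1 : ℝ) ≤ Fintype.card Z := by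
    exact_mod_cast Fintype.card_pos_iff.2 ⟨x0⟩
  let N : Z → ℕ := fun x => ⌊n * q x⌋₊
  have hN1 : ∀ x, (N x : ℝ) ≤ n * q x := fun x => Nat.floor_le (mul_nonneg hn'.le (hq.1 x))
  have hN2 : ∀ x, n * q x ≤ N x + 1 := fun x => (Nat.lt_floor_add_one _).le
  have hS : ∑ x, (n : ℝ) * q x = n := by rw [← Finset.mul_sum, hq.2, mul_one]
  have hS1 : ∑ x, (N x : ℝ) ≤ n := by
    rw [← hS]
    exact Finset.sum_le_sum fun x _ => hN1 x
  have hS2 : (n : ℝ) ≤ ∑ x, (N x : ℝ) + Fintype.card Z := by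
    have := Finset.sum_le_sum fun x (_ : x ∈ Finset.univ) => hN2 x
    rw [hS, Finset.sum_add_distrib] at this
    simpa using this
  have hS1' : ∑ x, N x ≤ n := by exact_mod_cast hS1
  -- The letters missing after rounding down are all put on `x0`.
  let r : ℕ := n - ∑ x, N x
  have hr : (r : ℝ) = n - ∑ x, (N x : ℝ) := by
    simp only [r]
    push_cast [Nat.cast_sub hS1']
    rfl
  let N' : Z → ℕ := fun x => N x + if x = x0 then r else 0
  have hN' : ∑ x, N' x = n := by
    simp only [N', Finset.sum_add_distrib, Finset.sum_ite_eq', Finset.mem_univ, if_true, r]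
    omega
  have hc : Fintype.card (Fin n) = Fintype.card (Σ x, Fin (N' x)) := by simp [hN']
  let e := Fintype.equivOfCardEq hc
  refine ⟨fun i => (e i).1, fun x => ?_⟩
  have hcnt : (cnt (fun i => (e i).1) x : ℝ) = N' x := by
    rw [cnt_eq_sum, Equiv.sum_comp e fun p => if p.1 = x then (1 : ℝ) else 0, Fintype.sum_sigma]
    rw [Finset.sum_eq_single x]
    · simp
    · intro b _ hb
      simp [hb]
    · simp
  unfold emp
  rw [hcnt, ← mul_div_cancel_left₀ (q x) hn'.ne', ← sub_div, abs_div, abs_of_pos hn']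
  refine div_le_div_of_nonneg_right ?_ hn'.le
  have h1 := hN1 x
  have h2 := hN2 x
  rw [abs_le]
  simp only [N']
  split_ifs <;> push_cast <;> constructor <;> linarith [Nat.cast_nonneg (α := ℝ) r]

lemma negMulLog_add_le {t δ : ℝ} (ht : 0 ≤ t) (hδ : 0 ≤ δ) :
    Real.negMulLog (t + δ) ≤ Real.negMulLog t + Real.negMulLog δ := by
  rcases ht.eq_or_lt with rfl | ht
  · simp
  rcases hδ.eq_or_lt with rfl | hδ
  · simp
  have h1 : Real.log t ≤ Real.log (t + δ) := Real.log_le_log ht (by linarith)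
  have h2 : Real.log δ ≤ Real.log (t + δ) := Real.log_le_log hδ (by linarith)
  unfold Real.negMulLog
  nlinarith

lemma negMulLog_le_add {t δ : ℝ} (ht : 0 ≤ t) (hδ : 0 ≤ δ) (h1 : t + δ ≤ 1) :
    Real.negMulLog t ≤ Real.negMulLog (t + δ) + δ := by
  rcases ht.eq_or_lt with rfl | ht
  · have := Real.negMulLog_nonneg (x := 0 + δ) (by linarith) h1
    simp at this ⊢
    linarith
  have h2 : Real.log (t + δ) ≤ 0 := Real.log_nonpos (by linarith) h1
  have h3 : Real.log ((t + δ) / t) ≤ (t + δ) / t - 1 := Real.log_le_sub_one_of_pos (by positivity)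
  rw [Real.log_div (by positivity) ht.ne'] at h3
  have h4 : t * (Real.log (t + δ) - Real.log t) ≤ δ := by
    have := mul_le_mul_of_nonneg_left h3 ht.le
    have e : t * ((t + δ) / t - 1) = δ := by field_simp; ring
    linarith
  unfold Real.negMulLog
  nlinarith

lemma negMulLog_le_one {t : ℝ} (h0 : 0 ≤ t) : Real.negMulLog t ≤ 1 := by
  rcases h0.eq_or_lt with rfl | h0
  · simp
  have := Real.one_sub_inv_le_log_of_pos h0
  unfold Real.negMulLog
  have e : t * (1 - t⁻¹) = t - 1 := by field_simp
  nlinarith [mul_le_mul_of_nonneg_left this h0.le]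

lemma negMulLog_diff_le {n : ℕ} (hn : 3 ≤ n) {c s t : ℝ} (hs0 : 0 ≤ s)
    (ht0 : 0 ≤ t) (ht1 : t ≤ 1) (h : |s - t| ≤ c / n) :
    Real.negMulLog s - Real.negMulLog t ≤ (2 * c + 1) * (Real.log n / n) := by
  have hn' : (0 : ℝ) < n := by positivity
  have hlog : 1 ≤ Real.log n := by
    rw [Real.le_log_iff_exp_le hn']
    have h3 : (3 : ℝ) ≤ n := by exact_mod_cast hn
    linarith [Real.exp_one_lt_d9]
  have hc : 0 ≤ c := by
    have := (abs_nonneg _).trans h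
    rwa [le_div_iff₀ hn', zero_mul] at this
  have hlin : c / n ≤ (2 * c + 1) * (Real.log n / n) := by
    rw [← mul_div_assoc]
    refine div_le_div_of_nonneg_right ?_ hn'.le
    nlinarith
  rcases le_total s t with hst | hst
  · have := negMulLog_le_add hs0 (sub_nonneg.2 hst) (by linarith)
    rw [add_sub_cancel] at this
    rw [abs_sub_comm, abs_of_nonneg (by linarith)] at h
    linarith
  · have h1 := negMulLog_add_le ht0 (sub_nonneg.2 hst)
    rw [add_sub_cancel] at h1
    rw [abs_of_nonneg (by linarith)] at h
    set δ := s - t with hδ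
    have hδ0 : 0 ≤ δ := by linarith
    -- `δ log (1/δ) = δ log n + (1/n) (n δ) log (1/(n δ))`, and the last factor is at most `1`.
    have h2 : Real.negMulLog δ ≤ c / n * Real.log n + 1 / n := by
      have h3 := negMulLog_le_one (mul_nonneg hn'.le hδ0)
      rw [Real.negMulLog_mul] at h3
      have h4 : Real.negMulLog δ ≤ δ * Real.log n + 1 / n := by
        rw [← mul_le_mul_iff_right₀ hn']
        have e : (n : ℝ) * (δ * Real.log n + 1 / n) = n * δ * Real.log n + 1 := by field_simp
        rw [e]
        simp only [Real.negMulLog] at h3 ⊢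
        linarith
      have h5 : δ * Real.log n ≤ c / n * Real.log n := by gcongr
      linarith
    have h3 : c / n * Real.log n + 1 / n ≤ (2 * c + 1) * (Real.log n / n) := by
      rw [← mul_div_assoc, div_mul_eq_mul_div, ← add_div]
      refine div_le_div_of_nonneg_right ?_ hn'.le
      nlinarith
    linarith

/-- The entropy of `p` in nats. -/
def natH {α : Type*} [Fintype α] (p : α → ℝ) : ℝ := ∑ a, Real.negMulLog (p a)

lemma natH_diff_le {α : Type*} [Fintype α] {n : ℕ} (hn : 3 ≤ n) {c : ℝ} {p p' : α → ℝ}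
    (hp : IsPMF p) (hp' : IsPMF p') (h : ∀ a, |p a - p' a| ≤ c / n) :
    natH p - natH p' ≤ Fintype.card α * (2 * c + 1) * (Real.log n / n) := by
  unfold natH
  rw [← Finset.sum_sub_distrib]
  refine (Finset.sum_le_sum fun a _ => negMulLog_diff_le hn (hp.1 a)
    (hp'.1 a) (isPMF_le_one hp' a) (h a)).trans (le_of_eq ?_)
  simp
  ring

lemma log_two_mul_MIJ {q : X1 × X2 → ℝ} (hq : IsPMF q) :
    Real.log 2 * MIJ q = natH (margA q) + natH (margB q) - natH q := by
  have hA : natH (margA q) = ∑ z, q z * (-Real.log (margA q z.1)) := by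
    rw [sum_prodType]
    refine Finset.sum_congr rfl fun x1 _ => ?_
    simp only
    rw [← Finset.sum_mul]
    simp only [Real.negMulLog, margA]
    ring
  have hB : natH (margB q) = ∑ z, q z * (-Real.log (margB q z.2)) := by
    rw [sum_prodType, Finset.sum_comm]
    refine Finset.sum_congr rfl fun x2 _ => ?_
    simp only
    rw [← Finset.sum_mul]
    simp only [Real.negMulLog, margB]
    ring
  have hM : Real.log 2 * MIJ q = ∑ z, q z * Real.log (q z / (margA q z.1 * margB q z.2)) := by
    unfold MIJ
    rw [sum_prodType, Finset.mul_sum]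
    refine Finset.sum_congr rfl fun x1 _ => ?_
    rw [Finset.mul_sum]
    refine Finset.sum_congr rfl fun x2 _ => ?_
    have : Real.log 2 ≠ 0 := (Real.log_pos one_lt_two).ne'
    simp only [Real.logb]
    field_simp
  rw [hM, hA, hB, natH, ← Finset.sum_add_distrib, ← Finset.sum_sub_distrib]
  refine Finset.sum_congr rfl fun z _ => ?_
  rcases (hq.1 z).eq_or_lt with h | h
  · rw [← h]
    simp
  · have h1 := h.trans_le (le_margA hq z.1 z.2)
    have h2 := h.trans_le (le_margB hq z.1 z.2)
    rw [Real.log_div h.ne' (by positivity), Real.log_mul h1.ne' h2.ne', Real.negMulLog]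
    ring

lemma log_two_mul_IsumJ {W : X1 → X2 → Y → ℝ} (hW : IsChannel W) {q : X1 × X2 → ℝ}
    (hq : IsPMF q) :
    Real.log 2 * IsumJ W q = natH (outDistJ W q) - ∑ z, q z * natH (W z.1 z.2) := by
  have hO : natH (outDistJ W q) =
      ∑ z, ∑ y, q z * W z.1 z.2 y * (-Real.log (outDistJ W q y)) := by
    rw [Finset.sum_comm]
    refine Finset.sum_congr rfl fun y _ => ?_
    rw [← Finset.sum_mul, sum_prodType]
    simp only [Real.negMulLog, outDistJ]
    ring
  have hM : Real.log 2 * IsumJ W q =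
      ∑ z, ∑ y, q z * W z.1 z.2 y * Real.log (W z.1 z.2 y / outDistJ W q y) := by
    unfold IsumJ
    rw [sum_prodType, Finset.mul_sum]
    refine Finset.sum_congr rfl fun x1 _ => ?_
    rw [Finset.mul_sum]
    refine Finset.sum_congr rfl fun x2 _ => ?_
    rw [Finset.mul_sum]
    refine Finset.sum_congr rfl fun y _ => ?_
    have : Real.log 2 ≠ 0 := (Real.log_pos one_lt_two).ne'
    simp only [Real.logb]
    field_simp
  rw [hM, hO, ← Finset.sum_sub_distrib]
  refine Finset.sum_congr rfl fun z _ => ?_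
  rw [natH, Finset.mul_sum, ← Finset.sum_sub_distrib]
  refine Finset.sum_congr rfl fun y _ => ?_
  rcases (hq.1 z).eq_or_lt with h | h
  · rw [← h]
    simp
  rcases (hW.1 z.1 z.2 y).eq_or_lt with h' | h'
  · rw [← h']
    simp
  · rw [Real.log_div h'.ne' (outDistJ_pos hW hq h h').ne', Real.negMulLog]
    ring

/-- Every joint pmf is approximated by a type whose mutual informations differ from the
original ones by `O (log n / n)`, uniformly. -/
lemma exists_good_type {W : X1 → X2 → Y → ℝ} (hW : IsChannel W) :
    ∃ C : ℝ, 0 ≤ C ∧ ∀ q : X1 × X2 → ℝ, IsPMF q → ∀ n : ℕ, 3 ≤ n → ∃ z : Fin n → X1 × X2,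
      Real.log 2 * MIJ (emp z) ≤ Real.log 2 * MIJ q + C * (Real.log n / n) ∧
      Real.log 2 * IsumJ W q - C * (Real.log n / n) ≤ Real.log 2 * IsumJ W (emp z) := by
  let d : ℝ := Fintype.card (X1 × X2)
  let A : ℝ := Fintype.card X1
  let B : ℝ := Fintype.card X2
  let D : ℝ := Fintype.card Y
  have hd : 0 ≤ d := Nat.cast_nonneg _
  have hA : 0 ≤ A := Nat.cast_nonneg _
  have hB : 0 ≤ B := Nat.cast_nonneg _
  have hD : 0 ≤ D := Nat.cast_nonneg _
  let Ca : ℝ := A * (2 * (B * d) + 1)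
  let Cb : ℝ := B * (2 * (A * d) + 1)
  let Cz : ℝ := d * (2 * d + 1)
  let Co : ℝ := D * (2 * (d * d) + 1)
  let Cl : ℝ := d * d * D
  have hCa : 0 ≤ Ca := by positivity
  have hCb : 0 ≤ Cb := by positivity
  have hCz : 0 ≤ Cz := by positivity
  have hCo : 0 ≤ Co := by positivity
  have hCl : 0 ≤ Cl := by positivity
  refine ⟨Ca + Cb + Cz + Co + Cl, by positivity, fun q hq n hn => ?_⟩
  have hn0 : 0 < n := by omega
  have hn' : (0 : ℝ) < n := by positivity
  have hlog : 1 ≤ Real.log n := by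
    rw [Real.le_log_iff_exp_le hn']
    have h3 : (3 : ℝ) ≤ n := by exact_mod_cast hn
    linarith [Real.exp_one_lt_d9]
  obtain ⟨z, hz⟩ := exists_type hq hn0
  have hP := emp_isPMF hn0 z
  change ∀ x, |emp z x - q x| ≤ d / n at hz
  refine ⟨z, ?_⟩
  set P := emp z
  have hL : 0 ≤ Real.log n / n := by positivity
  have ha : ∀ x1, |margA P x1 - margA q x1| ≤ B * d / n := fun x1 => by
    unfold margA
    rw [← Finset.sum_sub_distrib]
    refine (Finset.abs_sum_le_sum_abs _ _).trans
      ((Finset.sum_le_sum fun x2 _ => hz (x1, x2)).trans (le_of_eq ?_))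
    simp [B]
    ring
  have hb : ∀ x2, |margB P x2 - margB q x2| ≤ A * d / n := fun x2 => by
    unfold margB
    rw [← Finset.sum_sub_distrib]
    refine (Finset.abs_sum_le_sum_abs _ _).trans
      ((Finset.sum_le_sum fun x1 _ => hz (x1, x2)).trans (le_of_eq ?_))
    simp [A]
    ring
  have ho : ∀ y, |outDistJ W q y - outDistJ W P y| ≤ d * d / n := fun y => by
    have e : ∀ r : X1 × X2 → ℝ, outDistJ W r y = ∑ x, r x * W x.1 x.2 y := fun r => by
      rw [sum_prodType]
      rfl
    rw [e, e, ← Finset.sum_sub_distrib]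
    have hb : ∀ x ∈ Finset.univ, |q x * W x.1 x.2 y - P x * W x.1 x.2 y| ≤ d / n := fun x _ => by
      rw [← sub_mul, abs_mul, abs_of_nonneg (hW.1 x.1 x.2 y), abs_sub_comm]
      exact (mul_le_of_le_one_right (abs_nonneg _)
        (isPMF_le_one (channel_isPMF hW x.1 x.2) y)).trans (hz x)
    refine (Finset.abs_sum_le_sum_abs _ _).trans ((Finset.sum_le_sum hb).trans (le_of_eq ?_))
    rw [Finset.sum_const, nsmul_eq_mul]
    simp only [Finset.card_univ, d]
    ring
  have hl : ∑ x, P x * natH (W x.1 x.2) - ∑ x, q x * natH (W x.1 x.2) ≤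
      Cl * (Real.log n / n) := by
    rw [← Finset.sum_sub_distrib]
    have hb : ∀ x ∈ Finset.univ, P x * natH (W x.1 x.2) - q x * natH (W x.1 x.2) ≤
        d / n * D := fun x _ => by
      rw [← sub_mul]
      have h0 : 0 ≤ natH (W x.1 x.2) := Finset.sum_nonneg fun y _ =>
        Real.negMulLog_nonneg (hW.1 _ _ _) (isPMF_le_one (channel_isPMF hW x.1 x.2) y)
      have h1 : natH (W x.1 x.2) ≤ D := by
        refine (Finset.sum_le_sum fun y _ => negMulLog_le_one (hW.1 x.1 x.2 y)).trans
          (le_of_eq ?_)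
        simp [D]
      exact mul_le_mul ((le_abs_self _).trans (hz x)) h1 h0 (by positivity)
    refine (Finset.sum_le_sum hb).trans ?_
    rw [Finset.sum_const, nsmul_eq_mul]
    simp only [Finset.card_univ]
    change d * (d / n * D) ≤ _
    calc d * (d / n * D) = Cl * (1 / n) := by simp only [Cl]; ring
      _ ≤ Cl * (Real.log n / n) := by gcongr
  have h1 := natH_diff_le hn (margA_isPMF hP) (margA_isPMF hq) ha
  have h2 := natH_diff_le hn (margB_isPMF hP) (margB_isPMF hq) hb
  have h3 := natH_diff_le hn hq hP fun x => by rw [abs_sub_comm]; exact hz x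
  have h4 := natH_diff_le hn (outDistJ_isPMF hW hq) (outDistJ_isPMF hW hP) ho
  rw [log_two_mul_MIJ hP, log_two_mul_MIJ hq, log_two_mul_IsumJ hW hP, log_two_mul_IsumJ hW hq]
  change _ ≤ Ca * _ at h1
  change _ ≤ Cb * _ at h2
  change _ ≤ Cz * _ at h3
  change _ ≤ Co * _ at h4
  have g1 := mul_nonneg hCa hL
  have g2 := mul_nonneg hCb hL
  have g3 := mul_nonneg hCz hL
  have g4 := mul_nonneg hCo hL
  have g5 := mul_nonneg hCl hL
  simp only [add_mul]
  constructor <;> linarith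

/-! ### Boundedness of the sum rate -/

/-- The success probabilities of all message pairs sum to at most `|𝒴|^n`, since each output is
decoded to a single pair. -/
lemma card_le_of_existsCode {W : X1 → X2 → Y → ℝ} (hW : IsChannel W) {n M1 M2 K : ℕ}
    (hM1 : 0 < M1) (hM2 : 0 < M2) {ε : ℝ} (hε : ε < 1) (h : ExistsCode W n M1 M2 K ε) :
    (M1 : ℝ) * M2 ≤ (Fintype.card Y : ℝ) ^ n / (1 - ε) := by
  obtain ⟨e, f1, f2, g, hg⟩ := h
  have hM : (0 : ℝ) < M1 * M2 := by positivity
  let V : Fin M1 → Fin M2 → (Fin n → Y) → ℝ := fun m1 m2 y =>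
    ∏ i, W (f1 m1 (e m1 m2) i) (f2 m2 (e m1 m2) i) (y i)
  have hV1 : ∀ m1 m2, ∑ y, V m1 m2 y = 1 := fun m1 m2 => by
    simp only [V]
    rw [sum_pi_prod (fun i y => W (f1 m1 (e m1 m2) i) (f2 m2 (e m1 m2) i) y)]
    exact Finset.prod_eq_one fun i _ => hW.2 _ _
  have hV2 : ∀ m1 m2 y, V m1 m2 y ≤ 1 := fun m1 m2 y =>
    Finset.prod_le_one (fun i _ => hW.1 _ _ _)
      fun i _ => isPMF_le_one (channel_isPMF hW _ _) _
  have hsucc : ∑ m1, ∑ m2, ∑ y, V m1 m2 y * (if g y = (m1, m2) then 1 else 0) ≤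
      (Fintype.card Y : ℝ) ^ n := by
    calc _ ≤ ∑ m1 : Fin M1, ∑ m2 : Fin M2, ∑ y : Fin n → Y,
          (if g y = (m1, m2) then (1 : ℝ) else 0) := by
          refine Finset.sum_le_sum fun m1 _ => Finset.sum_le_sum fun m2 _ =>
            Finset.sum_le_sum fun y _ => ?_
          exact mul_le_of_le_one_left (by split_ifs <;> norm_num) (hV2 m1 m2 y)
      _ = ∑ y : Fin n → Y, ∑ m : Fin M1 × Fin M2, (if g y = m then (1 : ℝ) else 0) := by
          symm
          rw [Finset.sum_comm, Fintype.sum_prod_type]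
      _ = _ := by simp
  have htot : ∑ m1, ∑ m2, ∑ y, V m1 m2 y * (if g y = (m1, m2) then 1 else 0) +
      ∑ m1, ∑ m2, ∑ y, V m1 m2 y * (if g y = (m1, m2) then 0 else 1) = (M1 : ℝ) * M2 := by
    simp only [← Finset.sum_add_distrib, ← mul_add]
    have : ∀ m1 m2 y, V m1 m2 y * ((if g y = (m1, m2) then 1 else 0) +
        (if g y = (m1, m2) then 0 else 1)) = V m1 m2 y := fun m1 m2 y => by
      split_ifs <;> simp
    simp only [this, hV1]
    simp
  have herr : ∑ m1, ∑ m2, ∑ y, V m1 m2 y * (if g y = (m1, m2) then 0 else 1) ≤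
      ε * (M1 * M2) := by
    unfold avgErr at hg
    rw [one_div, inv_mul_le_iff₀ hM] at hg
    linarith
  rw [le_div_iff₀ (by linarith)]
  linarith

lemma Rsum_bddAbove {W : X1 → X2 → Y → ℝ} (hW : IsChannel W) {n : ℕ} {ε : ℝ}
    (hε : ε < 1) (K : ℕ) :
    BddAbove {r | ∃ M1 M2 : ℕ, 0 < M1 ∧ 0 < M2 ∧ ExistsCode W n M1 M2 K ε ∧
      r = Real.logb 2 ((M1 : ℝ) * M2) / n} := by
  refine ⟨Real.logb 2 ((Fintype.card Y : ℝ) ^ n / (1 - ε)) / n, ?_⟩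
  rintro r ⟨M1, M2, hM1, hM2, hc, rfl⟩
  refine div_le_div_of_nonneg_right ?_ (Nat.cast_nonneg n)
  exact Real.logb_le_logb_of_le one_lt_two (by positivity) (card_le_of_existsCode hW hM1 hM2 hε hc)

lemma Rsum_nonneg (W : X1 → X2 → Y → ℝ) (n : ℕ) (ε : ℝ) (K : ℕ) : 0 ≤ Rsum W n ε K := by
  refine Real.sSup_nonneg ?_
  rintro r ⟨M1, M2, hM1, hM2, hc, rfl⟩
  refine div_nonneg (Real.logb_nonneg one_lt_two ?_) (Nat.cast_nonneg n)
  exact_mod_cast Nat.mul_pos hM1 hM2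

/-! ### The rate bound -/

/-- The sum rate is within `O (1/√n)` of `I(X₁,X₂;Y)`, for every joint pmf whose mutual information
`I(X₁;X₂)` is below the cooperation rate by a margin of order `log n / n`; the constants do not
depend on the pmf. -/
lemma rate_bound {W : X1 → X2 → Y → ℝ} (hW : IsChannel W) {ε : ℝ} (hε0 : 0 < ε) (hε1 : ε < 1) :
    ∃ (c1 c2 : ℝ) (n0 : ℕ), 0 ≤ c2 ∧ ∀ n : ℕ, n0 ≤ n → ∀ K : ℕ, 0 < K → ∀ q : X1 × X2 → ℝ,
      IsPMF q → MIJ q ≤ Real.logb 2 K / n - c1 * Real.logb 2 n / n →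
      IsumJ W q ≤ Rsum W n ε K + c2 / Real.sqrt n := by
  obtain ⟨C, hC, htype⟩ := exists_good_type hW
  obtain ⟨d, hd⟩ : ∃ d, d = Fintype.card (X1 × X2) := ⟨_, rfl⟩
  obtain ⟨a, ha⟩ : ∃ a, a = Fintype.card X1 := ⟨_, rfl⟩
  obtain ⟨D, hD⟩ : ∃ D, D = Fintype.card Y := ⟨_, rfl⟩
  have hl2 : 0 < Real.log 2 := Real.log_pos one_lt_two
  have hl4 : 0 ≤ Real.log (4 / ε) := Real.log_nonneg (by rw [le_div_iff₀ hε0]; linarith)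
  obtain ⟨s0, hs0, hs0'⟩ : ∃ s0 : ℝ, 0 < s0 ∧ s0 ^ 2 = 128 * (D + 1) / ε :=
    ⟨Real.sqrt (128 * (D + 1) / ε), Real.sqrt_pos.2 (by positivity), Real.sq_sqrt (by positivity)⟩
  refine ⟨C + 2 * (d + 1) + 1, (2 * (C + 2 * (a + d)) + 2 * s0 + 2 * Real.log (4 / ε)) / Real.log 2,
    max 3 ⌈4 / ε⌉₊, by positivity, fun n hn K hK q hq hMI => ?_⟩
  have hn3 : 3 ≤ n := (le_max_left _ _).trans hn
  have hnε : 4 / ε ≤ n := (Nat.le_ceil _).trans (by exact_mod_cast (le_max_right _ _).trans hn)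
  have hn0 : 0 < n := by omega
  have hn' : (0 : ℝ) < n := by positivity
  have hK' : (0 : ℝ) < K := by positivity
  obtain ⟨z, hz1, hz2⟩ := htype q hq n hn3
  have hP := emp_isPMF hn0 z
  set L := Real.log n with hL
  have hL1 : 1 ≤ L := by
    rw [hL, Real.le_log_iff_exp_le hn']
    have h3 : (3 : ℝ) ≤ n := by exact_mod_cast hn3
    linarith [Real.exp_one_lt_d9]
  set r := Real.sqrt n with hr
  have hr0 : 0 < r := Real.sqrt_pos.2 hn'
  have hrr : r * r = n := Real.mul_self_sqrt hn'.le
  have hr1 : 1 ≤ r := by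
    rw [hr, Real.one_le_sqrt]
    exact_mod_cast hn0
  have hLr : L ≤ 2 * r := by
    have h1 : L = 2 * Real.log r := by
      rw [hL, ← hrr, Real.log_mul hr0.ne' hr0.ne']
      ring
    linarith [Real.log_le_sub_one_of_pos hr0]
  -- Every polynomial factor `(e n) ^ k` is at most `n ^ (2 k)`.
  have hE : ∀ k : ℕ, (Real.exp 1 * n) ^ k ≤ Real.exp (2 * k * L) := fun k => by
    have h1 : Real.exp 1 * n = Real.exp (1 + L) := by rw [Real.exp_add, hL, Real.exp_log hn']
    rw [h1, ← Real.exp_nat_mul]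
    refine Real.exp_le_exp.2 ?_
    have : (0 : ℝ) ≤ k := Nat.cast_nonneg k
    nlinarith
  have hE0 : ∀ k : ℕ, 0 < (Real.exp 1 * n) ^ k := fun k => by positivity
  set s := s0 * r with hs
  have hspos : 0 < s := by positivity
  set T1 := Real.exp (n * natI1 W (emp z) - s) with hT1
  set T2 := Real.exp (n * natI2 W (emp z) - s) with hT2
  have hT1p : 0 < T1 := Real.exp_pos _
  have hT2p : 0 < T2 := Real.exp_pos _
  let M1 : ℕ := ⌊ε / 4 * T1 / (Real.exp 1 * n) ^ a⌋₊ + 1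
  let M2 : ℕ := ⌊ε / 4 * T2 / (Real.exp 1 * n) ^ d⌋₊ + 1
  have hM1 : 0 < M1 := Nat.succ_pos _
  have hM2 : 0 < M2 := Nat.succ_pos _
  have hcode := type_code hW hn0 z s hspos M1 M2 K hM1 hM2 hK
  rw [← hd, ← ha, ← hD, ← hT1, ← hT2] at hcode
  -- The four contributions to the error probability.
  have e1 : n * (16 * D) / s ^ 2 ≤ ε / 8 := by
    have : s ^ 2 = n * (128 * (D + 1) / ε) := by
      rw [hs, mul_pow, hs0', ← hrr]
      ring
    rw [this, div_le_iff₀ (by positivity)]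
    have : ε / 8 * (n * (128 * (D + 1) / ε)) = (n : ℝ) * (16 * (D + 1)) := by
      field_simp
      ring
    rw [this]
    gcongr
    linarith
  have e2 : ((M1 : ℝ) - 1) * ((Real.exp 1 * n) ^ a / T1) ≤ ε / 4 := by
    have h1 : (M1 : ℝ) - 1 ≤ ε / 4 * T1 / (Real.exp 1 * n) ^ a := by
      simp only [M1, Nat.cast_add, Nat.cast_one, add_sub_cancel_right]
      exact Nat.floor_le (by positivity)
    refine (mul_le_mul_of_nonneg_right h1 (by positivity)).trans (le_of_eq ?_)
    have := (hE0 a).ne'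
    field_simp
  have e3 : ((M2 : ℝ) - 1) * ((Real.exp 1 * n) ^ d / T2) ≤ ε / 4 := by
    have h1 : (M2 : ℝ) - 1 ≤ ε / 4 * T2 / (Real.exp 1 * n) ^ d := by
      simp only [M2, Nat.cast_add, Nat.cast_one, add_sub_cancel_right]
      exact Nat.floor_le (by positivity)
    refine (mul_le_mul_of_nonneg_right h1 (by positivity)).trans (le_of_eq ?_)
    have := (hE0 d).ne'
    field_simp
  have e4 : Real.exp (-(K * (Real.exp (-(n * (Real.log 2 * MIJ (emp z)))) /
      (Real.exp 1 * n) ^ (d + 1)))) ≤ ε / 4 := by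
    have h1 : n * (Real.log 2 * MIJ q) ≤ Real.log K - (C + 2 * (d + 1) + 1) * L := by
      have := mul_le_mul_of_nonneg_left hMI (mul_pos hn' hl2).le
      calc _ = n * Real.log 2 * MIJ q := by ring
        _ ≤ _ := this
        _ = _ := by
          simp only [Real.logb]
          field_simp
          rw [← hL]
    have h2 : n * (Real.log 2 * MIJ (emp z)) ≤ n * (Real.log 2 * MIJ q) + C * L := by
      have := mul_le_mul_of_nonneg_left hz1 hn'.le
      calc _ ≤ _ := this
        _ = _ := by field_simp
    have h3 : (n : ℝ) ≤ K * (Real.exp (-(n * (Real.log 2 * MIJ (emp z)))) /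
        (Real.exp 1 * n) ^ (d + 1)) := by
      rw [← mul_div_assoc, le_div_iff₀ (hE0 _)]
      have h4 := hE (d + 1)
      push_cast at h4
      calc (n : ℝ) * (Real.exp 1 * n) ^ (d + 1) ≤ n * Real.exp (2 * (d + 1) * L) := by gcongr
        _ = Real.exp (L + 2 * (d + 1) * L) := by rw [Real.exp_add, hL, Real.exp_log hn']
        _ ≤ Real.exp (Real.log K + -(n * (Real.log 2 * MIJ (emp z)))) := by
          refine Real.exp_le_exp.2 ?_
          nlinarith
        _ = _ := by rw [Real.exp_add, Real.exp_log hK']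
    calc _ ≤ Real.exp (-n) := Real.exp_le_exp.2 (by linarith)
      _ ≤ ε / 4 := by
        rw [Real.exp_neg]
        refine inv_le_of_inv_le₀ (by positivity) ?_
        rw [inv_div]
        linarith [Real.add_one_le_exp (n : ℝ)]
  have hcodeOK : ExistsCode W n M1 M2 K ε := by
    obtain ⟨e, f1, f2, g, hg⟩ := hcode
    exact ⟨e, f1, f2, g, hg.trans (by linarith)⟩
  have hR : Real.logb 2 ((M1 : ℝ) * M2) / n ≤ Rsum W n ε K :=
    le_csSup (Rsum_bddAbove hW hε1 K) ⟨M1, M2, hM1, hM2, hcodeOK, rfl⟩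
  -- Lower bound on the sizes of the message sets.
  have hlogM : ∀ (I : ℝ) (k : ℕ) (M : ℝ),
      ε / 4 * Real.exp (n * I - s) / (Real.exp 1 * n) ^ k ≤ M →
      n * I - s - Real.log (4 / ε) - 2 * k * L ≤ Real.log M := fun I k M hM => by
    have h0 : 0 < ε / 4 * Real.exp (n * I - s) / (Real.exp 1 * n) ^ k := by positivity
    rw [Real.le_log_iff_exp_le (h0.trans_le hM)]
    refine le_trans ?_ hM
    rw [Real.exp_sub, Real.exp_sub, Real.exp_log (by positivity)]
    calc _ = ε / 4 * Real.exp (n * I - s) / Real.exp (2 * k * L) := by field_simp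
      _ ≤ _ := by
        have := hE k
        gcongr
  have m1 := hlogM _ a M1 (by
    simp only [M1]
    push_cast
    exact (Nat.lt_floor_add_one _).le)
  have m2 := hlogM _ d M2 (by
    simp only [M2]
    push_cast
    exact (Nat.lt_floor_add_one _).le)
  have hsum := natI_add hW hP
  have m3 : n * (Real.log 2 * IsumJ W q) - C * L ≤ n * (Real.log 2 * IsumJ W (emp z)) := by
    have := mul_le_mul_of_nonneg_left hz2 hn'.le
    calc _ = n * (Real.log 2 * IsumJ W q - C * (L / n)) := by field_simp
      _ ≤ _ := this
  have m4 : n * (Real.log 2 * IsumJ W q) ≤ Real.log (M1 * M2) +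
      (2 * (C + 2 * (a + d)) + 2 * s0 + 2 * Real.log (4 / ε)) * r := by
    rw [Real.log_mul (by positivity) (by positivity)]
    rw [← hsum] at m3
    have t1 : (C + 2 * (a + d)) * L ≤ (C + 2 * (a + d)) * (2 * r) := by gcongr
    have t2 : Real.log (4 / ε) ≤ Real.log (4 / ε) * r := le_mul_of_one_le_right hl4 hr1
    rw [hs] at m1 m2
    linarith
  have m5 : IsumJ W q ≤ Real.logb 2 (M1 * M2) / n +
      (2 * (C + 2 * (a + d)) + 2 * s0 + 2 * Real.log (4 / ε)) / Real.log 2 / r := by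
    refine le_of_mul_le_mul_left ?_ (mul_pos hn' hl2)
    calc _ = n * (Real.log 2 * IsumJ W q) := by ring
      _ ≤ _ := m4
      _ = _ := by
        rw [Real.logb, ← hrr]
        field_simp
  linarith

/-- **Theorem 3, large-deviations achievability.**
Fix a discrete memoryless MAC and `ε ∈ (0,1)`.  There exist constants `c₁, c₂` and `n₀` such
that for every sequence `(K_n)` of positive integers with `log₂ K_n / log₂ n → ∞` and all
`n ≥ n₀` with `log₂ K_n ≥ c₁ log₂ n`:
`R_sum(n,ε,K_n) ≥ C_sum + Δ(log₂ K_n / n − c₁·(log₂ n)/n) − c₂/√n`. -/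
theorem sum_rate_large_deviations
    (W : X1 → X2 → Y → ℝ) (hW : IsChannel W)
    (ε : ℝ) (hε : ε ∈ Set.Ioo (0 : ℝ) 1) :
    ∃ (c1 c2 : ℝ) (n0 : ℕ),
      ∀ Kseq : ℕ → ℕ, (∀ n, 0 < Kseq n) →
        Filter.Tendsto (fun n : ℕ => Real.logb 2 (Kseq n : ℝ) / Real.logb 2 (n : ℝ))
          Filter.atTop Filter.atTop →
        ∀ n : ℕ, n0 ≤ n → c1 * Real.logb 2 (n : ℝ) ≤ Real.logb 2 (Kseq n : ℝ) →
          Csum W +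
              Delta W (Real.logb 2 (Kseq n : ℝ) / n - c1 * Real.logb 2 (n : ℝ) / n) -
              c2 / Real.sqrt n ≤
            Rsum W n ε (Kseq n) := by
  obtain ⟨c1, c2, n0, hc2, h⟩ := rate_bound hW hε.1 hε.2
  refine ⟨c1, c2, n0, fun Kseq hK _ n hn _ => ?_⟩
  have hsup : sSup {r | ∃ q : X1 × X2 → ℝ, IsPMF q ∧
      MIJ q ≤ Real.logb 2 (Kseq n : ℝ) / n - c1 * Real.logb 2 (n : ℝ) / n ∧
      r = IsumJ W q} ≤ Rsum W n ε (Kseq n) + c2 / Real.sqrt n := by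
    refine Real.sSup_le ?_ (add_nonneg (Rsum_nonneg _ _ _ _) (by positivity))
    rintro r ⟨q, hq, hMI, rfl⟩
    exact h n hn (Kseq n) (hK n) q hq hMI
  unfold Delta
  linarith

end
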